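/- Let λ_1 < … < λ_s be positive integers linearly independent over non-negative integers and let f(t) = (t^{λ_1},…,t^{λ_s}) be the corresponding curve-germ (ℝ,0)→(ℝ^s,0). Let ω_1 and ω_2 be germs at 0 of smooth differential k-forms on ℝ^s whose algebraic restrictions to f are diffeomorphic, i.e. there exist germs of diffeomorphisms Φ:(ℝ^s,0)→(ℝ^s,0) and φ:(ℝ,0)→(ℝ,0) with Φ∘f = f∘φ near 0 such that the pullback Φ^*ω_1 and ω_2 have the same algebraic restriction to f. Suppose r_1 (respectively r_2) is the least non-negative integer such that the quasi-homogeneous part ω_1^{(r_1)} (respectively ω_2^{(r_2)}) does not have zero algebraic restriction to f. Then r_1 = r_2, and there exists a non-zero real number c (namely c = (φ'(0))^{r_1}) such that ω_2^{(r_1)} and c·ω_1^{(r_1)} have the same algebraic restriction to f. -/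

import Mathlib

open Filter Topology

noncomputable section

/-- A germ of diffeomorphism of `(ℝ,0)`. -/
def IsDiffeoGerm1 (φ : ℝ → ℝ) : Prop :=
  φ 0 = 0 ∧ (∃ U ∈ 𝓝 (0 : ℝ), ContDiffOn ℝ (⊤ : ℕ∞) φ U) ∧ deriv φ 0 ≠ 0

/-- A germ of diffeomorphism of `(ℝ^s,0)`. -/
def IsDiffeoGerm (s : ℕ) (Φ : (Fin s → ℝ) → (Fin s → ℝ)) : Prop :=
  Φ 0 = 0 ∧ (∃ U ∈ 𝓝 (0 : Fin s → ℝ), ContDiffOn ℝ (⊤ : ℕ∞) Φ U) ∧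
    ∃ D : (Fin s → ℝ) ≃L[ℝ] (Fin s → ℝ),
      HasFDerivAt Φ (D : (Fin s → ℝ) →L[ℝ] (Fin s → ℝ)) 0

/-- Positive integers `λ 0, …, λ (s-1)` are linearly independent over non-negative
integers: no `λ j` is a `ℕ`-linear combination of the others. -/
def LinIndepNonneg {s : ℕ} (lam : Fin s → ℕ) : Prop :=
  ∀ j : Fin s, ∀ c : Fin s → ℕ, lam j ≠ ∑ i ∈ Finset.univ.erase j, c i * lam i

/-- A (set-theoretic) differential `k`-form on `ℝ^s`. -/
def FormK (s k : ℕ) := (Fin s → ℝ) → ((Fin k → Fin s → ℝ) → ℝ)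

/-- A germ at `0` of a smooth differential `k`-form: pointwise multilinear and
alternating in the tangent vectors, with coefficients smooth near `0`. -/
def IsFormK (s k : ℕ) (ω : FormK s k) : Prop :=
  (∀ (x : Fin s → ℝ) (v : Fin k → Fin s → ℝ) (i : Fin k) (a b : Fin s → ℝ) (c : ℝ),
      ω x (Function.update v i (a + c • b))
        = ω x (Function.update v i a) + c * ω x (Function.update v i b)) ∧
  (∀ (x : Fin s → ℝ) (v : Fin k → Fin s → ℝ),
      (∃ i j, i ≠ j ∧ v i = v j) → ω x v = 0) ∧
  (∀ v : Fin k → Fin s → ℝ,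
      ∃ U ∈ 𝓝 (0 : Fin s → ℝ), ContDiffOn ℝ (⊤ : ℕ∞) (fun x => ω x v) U)

/-- The exterior derivative of a `k`-form, evaluated on a `(k+1)`-tuple of (constant)
vectors:
`dω(x)(v₀,…,v_k) = ∑ i (−1)^i (Dω(x)(v i))(v₀,…,v̂ᵢ,…,v_k)`. -/
def extDK (s k : ℕ) (β : FormK s k) : FormK s (k+1) :=
  fun x v => ∑ i : Fin (k+1),
    (-1 : ℝ) ^ (i : ℕ) *
      fderiv ℝ (fun y => β y (fun j => v (i.succAbove j))) x (v i)

/-- A `k`-form vanishes on the image of a curve-germ. -/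
def VanishesK (s k : ℕ) (ω : FormK s k) (f : ℝ → Fin s → ℝ) : Prop :=
  ∀ᶠ t in 𝓝 (0 : ℝ), ∀ v, ω (f t) v = 0

/-- A `(k+1)`-form `ω` has zero algebraic restriction to the curve-germ `f` if
`ω = α + dβ` near `0` for a smooth `(k+1)`-form `α` and a smooth `k`-form `β`, both
vanishing on `im f`. -/
def ZeroARK (s k : ℕ) (ω : FormK s (k+1)) (f : ℝ → Fin s → ℝ) : Prop :=
  ∃ (α : FormK s (k+1)) (β : FormK s k), IsFormK s (k+1) α ∧ IsFormK s k β ∧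
    VanishesK s (k+1) α f ∧ VanishesK s k β f ∧
    ∀ᶠ x in 𝓝 (0 : Fin s → ℝ), ∀ v, ω x v = α x v + extDK s k β x v

/-- Two `(k+1)`-forms have the same algebraic restriction to `f` if their difference
has zero algebraic restriction to `f`. -/
def SameARK (s k : ℕ) (ω₁ ω₂ : FormK s (k+1)) (f : ℝ → Fin s → ℝ) : Prop :=
  ZeroARK s k (fun x v => ω₁ x v - ω₂ x v) f

/-- The pullback of a `k`-form by a (germ of) smooth map. -/
def pullK (s k : ℕ) (Φ : (Fin s → ℝ) → (Fin s → ℝ)) (ω : FormK s k) : FormK s k :=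
  fun x v => ω (Φ x) (fun j => fderiv ℝ Φ x (v j))

/-- Partial derivative in the `i`-th coordinate direction. -/
def pd (s : ℕ) (i : Fin s) (h : (Fin s → ℝ) → ℝ) : (Fin s → ℝ) → ℝ :=
  fun x => fderiv ℝ h x (Pi.single i 1)

/-- Iterated partial derivative `∂^α` for a multi-index `α`. -/
def mderiv (s : ℕ) (α : Fin s → ℕ) (h : (Fin s → ℝ) → ℝ) : (Fin s → ℝ) → ℝ :=
  (List.finRange s).foldr (fun i acc => (pd s i)^[α i] acc) h

/-- The Taylor term of `h` at `0` for the multi-index `α`: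
`(∂^α h(0)/α!) · x^α`. -/
def taylorTerm (s : ℕ) (α : Fin s → ℕ) (h : (Fin s → ℝ) → ℝ) (x : Fin s → ℝ) : ℝ :=
  (mderiv s α h 0 / ∏ i, (Nat.factorial (α i) : ℝ)) * ∏ i, x i ^ α i

open scoped Classical in
/-- The quasi-homogeneous part of quasi-degree `r` of a `k`-form `ω`, with respect to
the weights `lam`:  `ω^{(r)} = ∑_{i₁<…<i_k} P_{I,r} · dx_{i₁}∧…∧dx_{i_k}`, where
`P_{I,r}` is the sum of the Taylor terms of the coefficient `ω(·)(e_{i₁},…,e_{i_k})`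
over multi-indices `α` with `∑ α_l·λ_l = r − (λ_{i₁}+…+λ_{i_k})`. -/
def qhPartK (s k : ℕ) (lam : Fin s → ℕ) (r : ℕ) (ω : FormK s k) : FormK s k :=
  fun x v =>
    ∑ I : Fin k → Fin s,
      if StrictMono I then
        (∑ᶠ α : Fin s → ℕ,
          if (∑ l, α l * lam l) + (∑ j, lam (I j)) = r then
            taylorTerm s α (fun y => ω y (fun j => Pi.single (I j) (1 : ℝ))) x
          else 0)
          * Matrix.det (Matrix.of fun a b : Fin k => v a (I b))
      else 0



/-- smooth near zero -/
def Sm {s : ℕ} (h : (Fin s → ℝ) → ℝ) : Prop :=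
  ∀ᶠ x in 𝓝 (0 : Fin s → ℝ), ContDiffAt ℝ (⊤ : ℕ∞) h x

theorem Sm_iff {s : ℕ} {h : (Fin s → ℝ) → ℝ} :
    (∃ U ∈ 𝓝 (0 : Fin s → ℝ), ContDiffOn ℝ (⊤ : ℕ∞) h U) ↔ Sm h := by
  constructor
  · rintro ⟨U, hU, hc⟩
    filter_upwards [eventually_mem_nhds_iff.2 hU] with x hx
    exact hc.contDiffAt hx
  · intro hh
    exact ⟨_, hh, fun x hx => ContDiffAt.contDiffWithinAt hx⟩

namespace Sm
variable {s : ℕ} {h g : (Fin s → ℝ) → ℝ}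

theorem of_contDiff (hh : ContDiff ℝ (⊤ : ℕ∞) h) : Sm h :=
  Eventually.of_forall fun _ => hh.contDiffAt

theorem add (hh : Sm h) (hg : Sm g) : Sm (fun x => h x + g x) := by
  filter_upwards [hh, hg] with x a b using a.add b

theorem sub (hh : Sm h) (hg : Sm g) : Sm (fun x => h x - g x) := by
  filter_upwards [hh, hg] with x a b using a.sub b

theorem mul (hh : Sm h) (hg : Sm g) : Sm (fun x => h x * g x) := by
  filter_upwards [hh, hg] with x a b using a.mul b

theorem const (c : ℝ) : Sm (fun _ : Fin s → ℝ => c) := of_contDiff contDiff_const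

theorem coord (i : Fin s) : Sm (fun x : Fin s → ℝ => x i) := of_contDiff (contDiff_apply ℝ ℝ i)

theorem sum {ι : Type*} {t : Finset ι} {F : ι → (Fin s → ℝ) → ℝ} (hF : ∀ i ∈ t, Sm (F i)) :
    Sm (fun x => ∑ i ∈ t, F i x) := by
  have : ∀ᶠ x in 𝓝 (0 : Fin s → ℝ), ∀ i ∈ t, ContDiffAt ℝ (⊤ : ℕ∞) (F i) x :=
    (Filter.eventually_all_finset t).2 hF
  filter_upwards [this] with x hx
  exact ContDiffAt.sum hx

theorem prod {ι : Type*} {t : Finset ι} {F : ι → (Fin s → ℝ) → ℝ} (hF : ∀ i ∈ t, Sm (F i)) :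
    Sm (fun x => ∏ i ∈ t, F i x) := by
  have : ∀ᶠ x in 𝓝 (0 : Fin s → ℝ), ∀ i ∈ t, ContDiffAt ℝ (⊤ : ℕ∞) (F i) x :=
    (Filter.eventually_all_finset t).2 hF
  filter_upwards [this] with x hx
  exact contDiffAt_prod hx

theorem congr (hh : Sm h) (e : g =ᶠ[𝓝 0] h) : Sm g := by
  filter_upwards [hh, e.eventuallyEq_nhds] with x a b using a.congr_of_eventuallyEq b

theorem diff (hh : Sm h) : ∀ᶠ x in 𝓝 (0 : Fin s → ℝ), DifferentiableAt ℝ h x := by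
  filter_upwards [hh] with x a using a.differentiableAt (by simp)

theorem fderiv_apply (hh : Sm h) (v : Fin s → ℝ) : Sm (fun x => fderiv ℝ h x v) := by
  filter_upwards [hh] with x a
  exact (a.fderiv_right (m := (⊤ : ℕ∞)) (by simp)).clm_apply contDiffAt_const

theorem pd (hh : Sm h) (i : Fin s) : Sm (pd s i h) := hh.fderiv_apply _

theorem eval (p : MvPolynomial (Fin s) ℝ) : Sm (fun x => MvPolynomial.eval x p) := by
  have : (fun x : Fin s → ℝ => MvPolynomial.eval x p)
      = fun x => ∑ d ∈ p.support, MvPolynomial.coeff d p * ∏ i, x i ^ d i := by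
    funext x; rw [MvPolynomial.eval_eq']
  rw [this]
  apply sum; intro d _
  refine (const _).mul (prod fun i _ => ?_)
  exact of_contDiff ((contDiff_apply ℝ ℝ i).pow _)

theorem comp {Φ : (Fin s → ℝ) → (Fin s → ℝ)} (hh : Sm h) (h0 : Φ 0 = 0)
    (hΦ : ∀ᶠ x in 𝓝 (0 : Fin s → ℝ), ContDiffAt ℝ (⊤ : ℕ∞) Φ x) :
    Sm (fun x => h (Φ x)) := by
  have hc : Tendsto Φ (𝓝 0) (𝓝 0) := by
    have := hΦ.self_of_nhds.continuousAt
    rw [ContinuousAt, h0] at this; exact this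
  filter_upwards [hΦ, hc.eventually hh] with x a b
  exact ContDiffAt.comp x b a

end Sm

section germ
variable {s : ℕ} {h g : (Fin s → ℝ) → ℝ}

theorem pd_congr (i : Fin s) (e : h =ᶠ[𝓝 0] g) : pd s i h =ᶠ[𝓝 0] pd s i g := by
  filter_upwards [e.eventuallyEq_nhds] with x hx
  simp only [pd, hx.fderiv_eq]

theorem pd_comm (hh : Sm h) (i j : Fin s) : pd s i (pd s j h) =ᶠ[𝓝 0] pd s j (pd s i h) := by
  filter_upwards [hh] with x a
  have hsym : IsSymmSndFDerivAt ℝ h x := a.isSymmSndFDerivAt (by simp only [minSmoothness_of_isRCLikeNormedField]; exact WithTop.coe_le_coe.2 le_top)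
  have hd : DifferentiableAt ℝ (fderiv ℝ h) x :=
    (a.fderiv_right (m := (⊤ : ℕ∞)) (by simp)).differentiableAt (by simp)
  have key : ∀ u v : Fin s → ℝ, fderiv ℝ (fun y => fderiv ℝ h y u) x v
      = fderiv ℝ (fderiv ℝ h) x v u := by
    intro u v
    rw [fderiv_clm_apply hd (differentiableAt_const _)]
    simp
  show fderiv ℝ (fun y => fderiv ℝ h y (Pi.single j 1)) x (Pi.single i 1)
    = fderiv ℝ (fun y => fderiv ℝ h y (Pi.single i 1)) x (Pi.single j 1)
  rw [key, key]
  exact hsym.eq _ _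

theorem pdit_congr (i : Fin s) (n : ℕ) (e : h =ᶠ[𝓝 0] g) :
    (pd s i)^[n] h =ᶠ[𝓝 0] (pd s i)^[n] g := by
  induction n generalizing h g with
  | zero => exact e
  | succ n ih => exact ih (pd_congr i e)

theorem Sm.pdit (hh : Sm h) (i : Fin s) (n : ℕ) : Sm ((_root_.pd s i)^[n] h) := by
  induction n generalizing h with
  | zero => exact hh
  | succ n ih => exact ih (hh.pd i)

theorem pdit_comm (hh : Sm h) (i j : Fin s) (n : ℕ) :
    pd s i ((pd s j)^[n] h) =ᶠ[𝓝 0] (pd s j)^[n] (pd s i h) := by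
  induction n generalizing h with
  | zero => rfl
  | succ n ih =>
    exact (ih (hh.pd j)).trans (pdit_congr j n (pd_comm hh i j))

def mdl (s : ℕ) (α : Fin s → ℕ) (l : List (Fin s)) (h : (Fin s → ℝ) → ℝ) : (Fin s → ℝ) → ℝ :=
  l.foldr (fun i acc => (pd s i)^[α i] acc) h

theorem Sm.mdl (hh : Sm h) (α : Fin s → ℕ) (l : List (Fin s)) : Sm (mdl s α l h) := by
  induction l with
  | nil => exact hh
  | cons j l ih => exact ih.pdit _ _

theorem mdl_congr (α : Fin s → ℕ) (l : List (Fin s)) (e : h =ᶠ[𝓝 0] g) :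
    mdl s α l h =ᶠ[𝓝 0] mdl s α l g := by
  induction l with
  | nil => exact e
  | cons j l ih => exact pdit_congr _ _ ih

theorem mdl_comm (hh : Sm h) (i : Fin s) (α : Fin s → ℕ) (l : List (Fin s)) :
    pd s i (mdl s α l h) =ᶠ[𝓝 0] mdl s α l (pd s i h) := by
  induction l with
  | nil => rfl
  | cons j l ih =>
    exact (pdit_comm (hh.mdl α l) i j (α j)).trans (pdit_congr _ _ ih)

theorem mdl_not_mem (i : Fin s) (α : Fin s → ℕ) (l : List (Fin s)) (hi : i ∉ l) :
    mdl s (α + Pi.single i 1) l h = mdl s α l h := by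
  induction l with
  | nil => rfl
  | cons j l ih =>
    simp only [List.mem_cons, not_or] at hi
    have := ih hi.2
    simp only [mdl, List.foldr_cons] at this ⊢
    rw [this]
    simp [Pi.single_apply, Ne.symm hi.1]

theorem mdl_succ (hh : Sm h) (i : Fin s) (α : Fin s → ℕ) (l : List (Fin s)) (hl : l.Nodup)
    (hi : i ∈ l) :
    mdl s (α + Pi.single i 1) l h =ᶠ[𝓝 0] mdl s α l (pd s i h) := by
  induction l with
  | nil => simp at hi
  | cons j l ih =>
    rw [List.nodup_cons] at hl
    by_cases hij : i = j
    · subst hij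
      have h1 : mdl s (α + Pi.single i 1) (i :: l) h = (pd s i)^[α i] (pd s i (mdl s α l h)) := by
        show (pd s i)^[(α + Pi.single i 1 : Fin s → ℕ) i] (mdl s (α + Pi.single i 1) l h) = _
        rw [mdl_not_mem i α l hl.1]
        simp
      rw [h1]
      exact pdit_congr _ _ (mdl_comm hh i α l)
    · have h2 := ih hl.2 (by simpa [hij] using hi)
      show (pd s j)^[(α + Pi.single i 1 : Fin s → ℕ) j] (mdl s (α + Pi.single i 1) l h) =ᶠ[𝓝 0] _
      have : (α + Pi.single i 1 : Fin s → ℕ) j = α j := by simp [Pi.single_apply, Ne.symm hij]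
      rw [this]
      exact pdit_congr _ _ h2

theorem mderiv_succ (hh : Sm h) (i : Fin s) (α : Fin s → ℕ) :
    mderiv s (α + Pi.single i 1) h 0 = mderiv s α (pd s i h) 0 :=
  (mdl_succ hh i α _ (List.nodup_finRange s) (List.mem_finRange i)).self_of_nhds

/-- Taylor coefficient -/
def tc (α : Fin s → ℕ) (h : (Fin s → ℝ) → ℝ) : ℝ :=
  mderiv s α h 0 / ∏ i, (Nat.factorial (α i) : ℝ)

theorem tc_congr (α : Fin s → ℕ) (e : h =ᶠ[𝓝 0] g) : tc α h = tc α g := by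
  unfold tc
  rw [show mderiv s α h 0 = mderiv s α g 0 from (mdl_congr α _ e).self_of_nhds]

theorem tc_zero : tc 0 h = h 0 := by
  have : ∀ l : List (Fin s), mdl s 0 l h = h := by
    intro l
    induction l with
    | nil => rfl
    | cons j l ih => show (pd s j)^[0] (mdl s 0 l h) = h; simpa using ih
  unfold tc
  rw [show mderiv s 0 h = h from this _]; simp

theorem tc_succ (hh : Sm h) (i : Fin s) (α : Fin s → ℕ) :
    tc α (pd s i h) = (α i + 1) * tc (α + Pi.single i 1) h := by
  unfold tc
  rw [mderiv_succ hh]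
  have hf : ∏ j, (Nat.factorial ((α + Pi.single i 1 : Fin s → ℕ) j) : ℝ)
      = (α i + 1) * ∏ j, (Nat.factorial (α j) : ℝ) := by
    rw [← Finset.mul_prod_erase _ _ (Finset.mem_univ i),
      ← Finset.mul_prod_erase Finset.univ (fun j => (Nat.factorial (α j) : ℝ)) (Finset.mem_univ i)]
    rw [← mul_assoc]
    congr 1
    · simp [Nat.factorial_succ]
    · apply Finset.prod_congr rfl
      intro j hj
      simp [Pi.single_apply, Finset.ne_of_mem_erase hj]
  rw [hf]
  have h1 : ((α i : ℝ) + 1) ≠ 0 := by positivity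
  have h2 : ∏ j, (Nat.factorial (α j) : ℝ) ≠ 0 :=
    Finset.prod_ne_zero_iff.2 fun j _ => by positivity
  field_simp

theorem mi_cases (α : Fin s → ℕ) : α = 0 ∨ ∃ (i : Fin s) (β : Fin s → ℕ), α = β + Pi.single i 1 := by
  by_cases hα : α = 0
  · exact Or.inl hα
  · right
    obtain ⟨i, hi⟩ := Function.ne_iff.1 hα
    refine ⟨i, α - Pi.single i 1, ?_⟩
    funext j
    simp only [Pi.add_apply, Pi.sub_apply]
    by_cases hj : j = i
    · subst hj; simp at hi ⊢; omega
    · simp [Pi.single_apply, hj]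

theorem mi_induction {P : (Fin s → ℕ) → Prop} (h0 : P 0)
    (hs : ∀ β i, P β → P (β + Pi.single i 1)) (α : Fin s → ℕ) : P α := by
  induction hn : ∑ i, α i using Nat.strong_induction_on generalizing α with
  | _ n ih =>
    rcases mi_cases α with rfl | ⟨i, β, rfl⟩
    · exact h0
    · apply hs
      apply ih (∑ j, β j) _ β rfl
      rw [← hn]; simp [Finset.sum_add_distrib]

theorem pd_lin (hh : Sm h) (hg : Sm g) (c : ℝ) (i : Fin s) :
    pd s i (fun x => h x + c * g x) =ᶠ[𝓝 0] fun x => pd s i h x + c * pd s i g x := by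
  filter_upwards [hh.diff, hg.diff] with x a b
  simp only [pd]
  rw [fderiv_fun_add a (b.const_mul c), fderiv_const_mul b]
  simp

theorem tc_lin (hh : Sm h) (hg : Sm g) (c : ℝ) (α : Fin s → ℕ) :
    tc α (fun x => h x + c * g x) = tc α h + c * tc α g := by
  induction α using mi_induction generalizing h g with
  | h0 => simp [tc_zero]
  | hs β i ih =>
    have h3 := tc_succ (hh.add ((Sm.const c).mul hg)) i β
    rw [tc_congr β (pd_lin hh hg c i), ih (hh.pd i) (hg.pd i), tc_succ hh, tc_succ hg] at h3
    have h1 : ((β i : ℝ) + 1) ≠ 0 := by positivity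
    apply mul_left_cancel₀ h1
    rw [← h3]; ring

theorem tc_add (hh : Sm h) (hg : Sm g) (α : Fin s → ℕ) :
    tc α (fun x => h x + g x) = tc α h + tc α g := by
  simpa using tc_lin hh hg 1 α

theorem tc_sub (hh : Sm h) (hg : Sm g) (α : Fin s → ℕ) :
    tc α (fun x => h x - g x) = tc α h - tc α g := by
  simpa [sub_eq_add_neg] using tc_lin hh hg (-1) α

theorem tc_const_zero (α : Fin s → ℕ) : tc α (fun _ => (0 : ℝ)) = 0 := by
  simpa using tc_sub (Sm.const (s := s) 0) (Sm.const 0) α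

theorem tc_smul (hg : Sm g) (c : ℝ) (α : Fin s → ℕ) :
    tc α (fun x => c * g x) = c * tc α g := by
  simpa [tc_const_zero] using tc_lin (Sm.const (s := s) 0) hg c α

theorem tc_sum {ι : Type*} (t : Finset ι) (F : ι → (Fin s → ℝ) → ℝ) (hF : ∀ i, Sm (F i))
    (α : Fin s → ℕ) : tc α (fun x => ∑ i ∈ t, F i x) = ∑ i ∈ t, tc α (F i) := by
  classical
  induction t using Finset.induction_on with
  | empty => simpa using tc_const_zero α
  | insert a t ha ih =>
    simp only [Finset.sum_insert ha]
    rw [tc_add (hF a) (Sm.sum fun i _ => hF i), ih]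

theorem pd_eval (p : MvPolynomial (Fin s) ℝ) (i : Fin s) (x : Fin s → ℝ) :
    pd s i (fun y => MvPolynomial.eval y p) x
      = MvPolynomial.eval x (MvPolynomial.pderiv i p) := by
  have hd : ∀ q : MvPolynomial (Fin s) ℝ,
      DifferentiableAt ℝ (fun y : Fin s → ℝ => MvPolynomial.eval y q) x := by
    intro q
    induction q using MvPolynomial.induction_on with
    | C a => simp
    | add p q hp hq => simpa using hp.fun_add hq
    | mul_X p n hp => simpa using hp.fun_mul (differentiableAt_apply n x)
  induction p using MvPolynomial.induction_on with
  | C a => simp [pd]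
  | add p q hp hq =>
    simp only [pd, map_add] at hp hq ⊢
    rw [fderiv_fun_add (hd p) (hd q), ← hp, ← hq]; rfl
  | mul_X p n hp =>
    simp only [pd, map_mul, MvPolynomial.eval_X] at hp ⊢
    rw [fderiv_fun_mul (hd p) (differentiableAt_apply n x), MvPolynomial.pderiv_mul]
    have : fderiv ℝ (fun y : Fin s → ℝ => y n) x (Pi.single i 1) = (Pi.single i 1 : Fin s → ℝ) n := by
      rw [(hasFDerivAt_apply n x).fderiv]; rfl
    simp only [_root_.add_apply, _root_.smul_apply, smul_eq_mul, hp, this,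
      map_add, map_mul, MvPolynomial.pderiv_X, MvPolynomial.eval_X]
    by_cases hni : n = i
    · subst hni; simp; ring
    · simp [Pi.single_apply, hni, Ne.symm hni]; ring

theorem tc_eval (p : MvPolynomial (Fin s) ℝ) (α : Fin s → ℕ) :
    tc α (fun x => MvPolynomial.eval x p)
      = MvPolynomial.coeff (Finsupp.equivFunOnFinite.symm α) p := by
  induction α using mi_induction generalizing p with
  | h0 =>
    rw [tc_zero]
    have : (Finsupp.equivFunOnFinite.symm (0 : Fin s → ℕ)) = 0 := by ext; simp
    rw [this, ← MvPolynomial.constantCoeff_eq, MvPolynomial.eval_zero]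
  | hs β i ih =>
    have h3 := tc_succ (Sm.eval p) i β
    rw [show pd s i (fun x => MvPolynomial.eval x p)
      = fun x => MvPolynomial.eval x (MvPolynomial.pderiv i p) from funext (pd_eval p i), ih,
      MvPolynomial.coeff_pderiv] at h3
    have h1 : ((β i : ℝ) + 1) ≠ 0 := by positivity
    apply mul_left_cancel₀ h1
    rw [← h3]
    have : (Finsupp.equivFunOnFinite.symm (β + Pi.single i 1))
      = Finsupp.equivFunOnFinite.symm β + Finsupp.single i 1 := by
      ext j; simp [Finsupp.single_apply, Pi.single_apply, eq_comm]
    rw [this]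
    simp [mul_comm]

end germ


section asym
open Asymptotics

theorem pow_bigO {a b : ℕ} (hab : a ≤ b) :
    (fun τ : ℝ => τ ^ b) =O[𝓝 0] fun τ => τ ^ a := by
  apply IsBigO.of_bound 1
  filter_upwards [Metric.ball_mem_nhds (0 : ℝ) one_pos] with τ hτ
  rw [one_mul, norm_pow, norm_pow]
  exact pow_le_pow_of_le_one (norm_nonneg _) (by simpa using (mem_ball_zero_iff.1 hτ).le) hab

theorem low_coeff_zero (p : ℕ) (q : ℕ → ℝ)
    (hO : (fun τ : ℝ => ∑ n ∈ Finset.range p, τ ^ n * q n) =O[𝓝[≠] 0] fun τ => τ ^ p) :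
    ∀ n < p, q n = 0 := by
  induction p with
  | zero => intro n hn; omega
  | succ p ih =>
    have hlast : (fun τ : ℝ => τ ^ p * q p) =O[𝓝[≠] 0] fun τ => τ ^ p := by
      simpa [mul_comm] using ((isBigO_refl (fun τ : ℝ => τ ^ p) (𝓝[≠] 0)).const_mul_left (q p))
    have h1 := hO.trans ((pow_bigO (Nat.le_succ p)).mono nhdsWithin_le_nhds)
    have h2 : ∀ n < p, q n = 0 := by
      apply ih
      have := h1.sub hlast
      refine this.congr_left fun τ => ?_
      rw [Finset.sum_range_succ]; ring
    have h3 : (fun τ : ℝ => q p) =O[𝓝[≠] 0] fun τ => τ := by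
      have h4 : (fun τ : ℝ => τ ^ p * q p) =O[𝓝[≠] 0] fun τ => τ ^ (p + 1) := by
        refine hO.congr_left fun τ => ?_
        rw [Finset.sum_range_succ, Finset.sum_eq_zero, zero_add]
        intro n hn; rw [h2 n (Finset.mem_range.1 hn), mul_zero]
      have h5 := (isBigO_refl (fun τ : ℝ => (τ ^ p)⁻¹) (𝓝[≠] 0)).mul h4
      refine (h5.congr' ?_ ?_)
      · filter_upwards [self_mem_nhdsWithin] with τ hτ
        have : τ ^ p ≠ 0 := pow_ne_zero _ hτ
        field_simp
      · filter_upwards [self_mem_nhdsWithin] with τ hτ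
        have : τ ^ p ≠ 0 := pow_ne_zero _ hτ
        rw [pow_succ]; field_simp
    have h6 : Tendsto (fun τ : ℝ => q p) (𝓝[≠] 0) (𝓝 0) :=
      h3.trans_tendsto (tendsto_id.mono_left nhdsWithin_le_nhds)
    have h7 : q p = 0 := tendsto_nhds_unique tendsto_const_nhds h6
    intro n hn
    rcases Nat.lt_succ_iff_lt_or_eq.1 hn with h | h
    · exact h2 n h
    · rw [h]; exact h7

variable {s : ℕ}

theorem taylor_bigO (N : ℕ) (R : (Fin s → ℝ) → ℝ) (hR : Sm R)
    (h0 : ∀ α : Fin s → ℕ, ∑ i, α i < N → tc α R = 0) :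
    R =O[𝓝 0] fun x => ‖x‖ ^ N := by
  induction N generalizing R with
  | zero =>
    simp only [pow_zero]
    exact hR.self_of_nhds.continuousAt.isBigO_one ℝ
  | succ N ih =>
    have h1 : ∀ i, pd s i R =O[𝓝 0] fun x => ‖x‖ ^ N := by
      intro i
      apply ih _ (hR.pd i)
      intro α hα
      rw [tc_succ hR, h0, mul_zero]
      simp [Finset.sum_add_distrib]; omega
    have h2 : (fun x => ∑ i, ‖pd s i R x‖) =O[𝓝 0] fun x => ‖x‖ ^ N :=
      IsBigO.fun_sum fun i _ => (h1 i).norm_left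
    obtain ⟨C, hC0, hC'⟩ := h2.exists_nonneg
    have hC := hC'.bound
    obtain ⟨ε, hε, hball⟩ := Metric.eventually_nhds_iff_ball.1 (hC.and hR.diff)
    apply IsBigO.of_bound C
    filter_upwards [Metric.ball_mem_nhds (0 : Fin s → ℝ) hε] with x hx
    have hb : ∀ y ∈ Metric.closedBall (0 : Fin s → ℝ) ‖x‖, ‖fderiv ℝ R y‖ ≤ C * ‖x‖ ^ N := by
      intro y hy
      have hyx : ‖y‖ ≤ ‖x‖ := mem_closedBall_zero_iff.1 hy
      have hy' : y ∈ Metric.ball (0 : Fin s → ℝ) ε := by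
        rw [mem_ball_zero_iff] at hx ⊢; linarith
      have hCy := (hball y hy').1
      have hs0 : 0 ≤ ∑ i, ‖pd s i R y‖ := Finset.sum_nonneg fun i _ => norm_nonneg _
      rw [Real.norm_of_nonneg hs0, Real.norm_of_nonneg (by positivity)] at hCy
      have h3 : ‖fderiv ℝ R y‖ ≤ ∑ i, ‖pd s i R y‖ := by
        apply ContinuousLinearMap.opNorm_le_bound _ hs0
        intro v
        have hv : v = ∑ i, v i • (Pi.single i (1 : ℝ) : Fin s → ℝ) := by
          simpa using (pi_eq_sum_univ' v)
        conv_lhs => rw [hv, map_sum]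
        rw [Finset.sum_mul]
        refine (norm_sum_le _ _).trans (Finset.sum_le_sum fun i _ => ?_)
        rw [map_smul, norm_smul, mul_comm]
        exact mul_le_mul_of_nonneg_left (norm_le_pi_norm v i) (norm_nonneg _)
      refine h3.trans ?_
      exact hCy.trans (mul_le_mul_of_nonneg_left (pow_le_pow_left₀ (norm_nonneg _) hyx N) hC0)
    have h4 := (convex_closedBall (0 : Fin s → ℝ) ‖x‖).norm_image_sub_le_of_norm_fderiv_le
      (fun y hy => (hball y (by
        rw [mem_ball_zero_iff] at hx ⊢
        exact (mem_closedBall_zero_iff.1 hy).trans_lt hx)).2) hb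
      (Metric.mem_closedBall_self (norm_nonneg x)) (mem_closedBall_zero_iff.2 le_rfl)
    have hR0 : R 0 = 0 := by
      rw [← tc_zero (h := R)]; exact h0 0 (by simp)
    rw [hR0, sub_zero, sub_zero] at h4
    rw [norm_pow, norm_norm, pow_succ, ← mul_assoc]
    exact h4

variable (lam : Fin s → ℕ)

def wt (α : Fin s → ℕ) : ℕ := ∑ l, α l * lam l

def dl (τ : ℝ) (x : Fin s → ℝ) : Fin s → ℝ := fun i => τ ^ lam i * x i

open scoped Classical in
def Pp (r m : ℕ) (h : (Fin s → ℝ) → ℝ) : MvPolynomial (Fin s) ℝ :=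
  ∑ α ∈ Fintype.piFinset (fun _ : Fin s => Finset.range (r + 1)),
    if wt lam α + m = r then
      MvPolynomial.monomial (Finsupp.equivFunOnFinite.symm α) (tc α h) else 0

variable {lam}

theorem le_wt (hpos : ∀ i, 0 < lam i) (α : Fin s → ℕ) (l : Fin s) : α l ≤ wt lam α := by
  calc α l ≤ α l * lam l := Nat.le_mul_of_pos_right _ (hpos l)
    _ ≤ _ := Finset.single_le_sum (f := fun l => α l * lam l) (fun _ _ => Nat.zero_le _)
      (Finset.mem_univ l)

theorem sum_le_wt (hpos : ∀ i, 0 < lam i) (α : Fin s → ℕ) : ∑ l, α l ≤ wt lam α :=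
  Finset.sum_le_sum fun l _ => Nat.le_mul_of_pos_right _ (hpos l)

theorem eval_monomial' (α : Fin s → ℕ) (c : ℝ) (x : Fin s → ℝ) :
    MvPolynomial.eval x (MvPolynomial.monomial (Finsupp.equivFunOnFinite.symm α) c)
      = c * ∏ i, x i ^ α i := by
  rw [MvPolynomial.eval_monomial, Finsupp.prod_fintype _ _ (fun i => pow_zero _)]
  simp

theorem coeff_box (N : ℕ) (F : (Fin s → ℕ) → ℝ) (α : Fin s → ℕ) :
    MvPolynomial.coeff (Finsupp.equivFunOnFinite.symm α)
      (∑ β ∈ Fintype.piFinset (fun _ : Fin s => Finset.range N),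
        MvPolynomial.monomial (Finsupp.equivFunOnFinite.symm β) (F β))
      = if (∀ i, α i < N) then F α else 0 := by
  classical
  rw [MvPolynomial.coeff_sum]
  simp only [MvPolynomial.coeff_monomial, EmbeddingLike.apply_eq_iff_eq]
  rw [Finset.sum_ite_eq']
  simp [Fintype.mem_piFinset]

theorem coeff_Pp (hpos : ∀ i, 0 < lam i) (r m : ℕ) (h : (Fin s → ℝ) → ℝ) (α : Fin s → ℕ) :
    MvPolynomial.coeff (Finsupp.equivFunOnFinite.symm α) (Pp lam r m h)
      = if wt lam α + m = r then tc α h else 0 := by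
  classical
  have : Pp lam r m h = ∑ β ∈ Fintype.piFinset (fun _ : Fin s => Finset.range (r + 1)),
        MvPolynomial.monomial (Finsupp.equivFunOnFinite.symm β)
          (if wt lam β + m = r then tc β h else 0) := by
    apply Finset.sum_congr rfl
    intro β _
    split_ifs <;> simp
  rw [this, coeff_box]
  by_cases hw : wt lam α + m = r
  · rw [if_pos, if_pos hw]
    intro i
    have := le_wt hpos α i
    omega
  · simp [hw]

theorem eval_Pp (hpos : ∀ i, 0 < lam i) (r m : ℕ) (h : (Fin s → ℝ) → ℝ) (x : Fin s → ℝ) :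
    (∑ᶠ α : Fin s → ℕ, open scoped Classical in
          if (∑ l, α l * lam l) + m = r then taylorTerm s α h x else 0)
      = MvPolynomial.eval x (Pp lam r m h) := by
  classical
  rw [finsum_eq_sum_of_support_subset (s := Fintype.piFinset (fun _ : Fin s => Finset.range (r + 1)))]
  · unfold Pp
    rw [map_sum]
    apply Finset.sum_congr rfl
    intro α _
    by_cases hw : wt lam α + m = r
    · rw [if_pos hw, if_pos (by exact hw), eval_monomial']; rfl
    · rw [if_neg hw, if_neg (by exact hw), map_zero]
  · intro α hα
    simp only [Function.mem_support, ne_eq, ite_eq_right_iff, Classical.not_imp] at hα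
    simp only [Finset.mem_coe, Fintype.mem_piFinset, Finset.mem_range]
    intro i
    have := le_wt hpos α i
    have h1 : wt lam α + m = r := hα.1
    omega

theorem mono_dl (α : Fin s → ℕ) (τ : ℝ) (x : Fin s → ℝ) :
    ∏ i, (dl lam τ x i) ^ α i = τ ^ wt lam α * ∏ i, x i ^ α i := by
  simp only [dl, mul_pow, Finset.prod_mul_distrib, wt]
  congr 1
  rw [← Finset.prod_pow_eq_pow_sum]
  apply Finset.prod_congr rfl
  intro i _
  rw [← pow_mul, mul_comm]

theorem eval_Pp_dl (r m : ℕ) (h : (Fin s → ℝ) → ℝ) (τ : ℝ) (x : Fin s → ℝ) :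
    τ ^ m * MvPolynomial.eval (dl lam τ x) (Pp lam r m h)
      = τ ^ r * MvPolynomial.eval x (Pp lam r m h) := by
  classical
  unfold Pp
  rw [map_sum, map_sum, Finset.mul_sum, Finset.mul_sum]
  apply Finset.sum_congr rfl
  intro α _
  split_ifs with hw
  · rw [eval_monomial', eval_monomial', mono_dl]
    conv_rhs => rw [← hw, pow_add]
    ring
  · simp

theorem dl_tendsto (hpos : ∀ i, 0 < lam i) (x : Fin s → ℝ) :
    Tendsto (fun τ => dl lam τ x) (𝓝 0) (𝓝 0) := by
  rw [tendsto_pi_nhds]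
  intro i
  have : Continuous fun τ : ℝ => τ ^ lam i * x i := by fun_prop
  simpa [dl, (hpos i).ne'] using this.tendsto 0

theorem dl_bigO (hpos : ∀ i, 0 < lam i) (x : Fin s → ℝ) :
    (fun τ => dl lam τ x) =O[𝓝 0] fun τ : ℝ => τ := by
  rw [isBigO_pi]
  intro i
  have := (pow_bigO (a := 1) (b := lam i) (hpos i)).const_mul_left (x i)
  simpa [dl, mul_comm] using this

variable (lam) in
def Lit (m p : ℕ) (h : (Fin s → ℝ) → ℝ) : Prop :=
  ∀ α : Fin s → ℕ, wt lam α + m < p → tc α h = 0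

theorem poly_bigO (p : ℕ) (q : MvPolynomial (Fin s) ℝ)
    (hq : ∀ α : Fin s → ℕ, wt lam α < p →
      MvPolynomial.coeff (Finsupp.equivFunOnFinite.symm α) q = 0) (x : Fin s → ℝ) :
    (fun τ => MvPolynomial.eval (dl lam τ x) q) =O[𝓝 0] fun τ : ℝ => τ ^ p := by
  have : (fun τ => MvPolynomial.eval (dl lam τ x) q) = fun τ => ∑ d ∈ q.support,
      MvPolynomial.coeff d q * (τ ^ wt lam d * ∏ i, x i ^ d i) := by
    funext τ
    rw [MvPolynomial.eval_eq']
    simp only [mono_dl]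
  rw [this]
  apply IsBigO.fun_sum
  intro d _
  by_cases hd : wt lam d < p
  · have h1 := hq d hd
    have h2 : Finsupp.equivFunOnFinite.symm (d : Fin s → ℕ) = d := by ext; simp
    rw [h2] at h1
    simp only [h1, zero_mul]
    exact isBigO_zero _ _
  · have h1 := (pow_bigO (not_lt.1 hd)).const_mul_left (MvPolynomial.coeff d q * ∏ i, x i ^ d i)
    refine h1.congr_left fun τ => ?_
    ring

theorem Lit.bigO0 (hpos : ∀ i, 0 < lam i) {p : ℕ} {h : (Fin s → ℝ) → ℝ} (hh : Sm h)
    (hl : Lit lam 0 p h) (x : Fin s → ℝ) :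
    (fun τ => h (dl lam τ x)) =O[𝓝 0] fun τ : ℝ => τ ^ p := by
  set T : MvPolynomial (Fin s) ℝ := ∑ β ∈ Fintype.piFinset (fun _ : Fin s => Finset.range p),
        MvPolynomial.monomial (Finsupp.equivFunOnFinite.symm β) (tc β h) with hT
  have h1 : (fun y => h y - MvPolynomial.eval y T) =O[𝓝 0] fun y => ‖y‖ ^ p := by
    apply taylor_bigO _ _ (hh.sub (Sm.eval T))
    intro α hα
    rw [tc_sub hh (Sm.eval T), tc_eval, hT, coeff_box, if_pos, sub_self]
    intro i
    exact (Finset.single_le_sum (f := α) (fun _ _ => Nat.zero_le _) (Finset.mem_univ i)).trans_lt hα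
  have h2 := h1.comp_tendsto (dl_tendsto hpos x)
  have h3 : (fun τ => ‖dl lam τ x‖ ^ p) =O[𝓝 0] fun τ : ℝ => τ ^ p := (dl_bigO hpos x).norm_left.pow p
  have h4 := h2.trans h3
  have h5 := poly_bigO (lam := lam) p T (by
    intro α hα
    rw [hT, coeff_box]
    split_ifs
    · exact hl α (by simpa using hα)
    · rfl) x
  refine (h4.add h5).congr_left fun τ => ?_
  simp

theorem sumPp (hpos : ∀ i, 0 < lam i) (p : ℕ) (h : (Fin s → ℝ) → ℝ) (hh : Sm h) :
    Lit lam 0 p (fun x => h x - ∑ n ∈ Finset.range p, MvPolynomial.eval x (Pp lam n 0 h)) := by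
  intro α hα
  rw [tc_sub hh (Sm.sum fun n _ => Sm.eval _), tc_sum _ _ (fun n => Sm.eval _)]
  simp only [tc_eval, coeff_Pp hpos]
  rw [Finset.sum_ite_eq, if_pos (by simpa using hα), sub_self]

theorem expand (hpos : ∀ i, 0 < lam i) (p : ℕ) (h : (Fin s → ℝ) → ℝ) (hh : Sm h)
    (x : Fin s → ℝ) :
    (fun τ => h (dl lam τ x) - ∑ n ∈ Finset.range p, τ ^ n * MvPolynomial.eval x (Pp lam n 0 h))
      =O[𝓝 0] fun τ : ℝ => τ ^ p := by
  refine ((sumPp hpos p h hh).bigO0 hpos (hh.sub (Sm.sum fun n _ => Sm.eval _)) x).congr_left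
    fun τ => ?_
  congr 1
  apply Finset.sum_congr rfl
  intro n _
  simpa using eval_Pp_dl (lam := lam) n 0 h τ x

theorem expand_zero (hpos : ∀ i, 0 < lam i) (p : ℕ) (h : (Fin s → ℝ) → ℝ) (hh : Sm h)
    (x : Fin s → ℝ) (hO : (fun τ => h (dl lam τ x)) =O[𝓝[≠] 0] fun τ : ℝ => τ ^ p) :
    ∀ n < p, MvPolynomial.eval x (Pp lam n 0 h) = 0 := by
  apply low_coeff_zero
  refine (hO.sub ((expand hpos p h hh x).mono nhdsWithin_le_nhds)).congr_left fun τ => ?_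
  simp

theorem Lit.bigO (hpos : ∀ i, 0 < lam i) {m p : ℕ} {h : (Fin s → ℝ) → ℝ} (hh : Sm h)
    (hl : Lit lam m p h) (x : Fin s → ℝ) :
    (fun τ => τ ^ m * h (dl lam τ x)) =O[𝓝 0] fun τ : ℝ => τ ^ p := by
  have h1 : Lit lam 0 (p - m) h := fun α hα => hl α (by omega)
  have h2 := (isBigO_refl (fun τ : ℝ => τ ^ m) (𝓝 0)).mul (h1.bigO0 hpos hh x)
  refine h2.trans ?_
  simp only [← pow_add]
  exact pow_bigO (by omega)

theorem lit_of_bigO (hpos : ∀ i, 0 < lam i) {m p : ℕ} {h : (Fin s → ℝ) → ℝ} (hh : Sm h)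
    (hO : ∀ x, (fun τ => τ ^ m * h (dl lam τ x)) =O[𝓝 0] fun τ : ℝ => τ ^ p) :
    Lit lam m p h := by
  intro α hα
  have h1 : ∀ x, MvPolynomial.eval x (Pp lam (wt lam α) 0 h) = 0 := by
    intro x
    apply expand_zero hpos (p - m) h hh x _ _ (by omega)
    have h2 := (isBigO_refl (fun τ : ℝ => (τ ^ m)⁻¹) (𝓝[≠] 0)).mul ((hO x).mono nhdsWithin_le_nhds)
    refine h2.congr' ?_ ?_
    · filter_upwards [self_mem_nhdsWithin] with τ hτ
      have : τ ^ m ≠ 0 := pow_ne_zero _ hτ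
      field_simp
    · filter_upwards [self_mem_nhdsWithin] with τ hτ
      have : τ ^ m ≠ 0 := pow_ne_zero _ hτ
      have h3 : p = m + (p - m) := by omega
      conv_lhs => rw [h3, pow_add]
      field_simp
  have h2 : Pp lam (wt lam α) 0 h = 0 := MvPolynomial.funext fun x => by simp [h1 x]
  have h3 := coeff_Pp hpos (wt lam α) 0 h α
  rw [h2] at h3
  simpa using h3.symm

theorem Lit.pd {m p : ℕ} {h : (Fin s → ℝ) → ℝ} (hh : Sm h)
    (hl : Lit lam m p h) (i : Fin s) : Lit lam (m + lam i) p (pd s i h) := by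
  intro α hα
  rw [tc_succ hh, hl, mul_zero]
  have : wt lam (α + Pi.single i 1) = wt lam α + lam i := by
    simp [wt, add_mul, Finset.sum_add_distrib, Pi.single_apply]
  omega

theorem pderiv_Pp (hpos : ∀ i, 0 < lam i) (r m : ℕ) (h : (Fin s → ℝ) → ℝ) (hh : Sm h) (i : Fin s) :
    MvPolynomial.pderiv i (Pp lam r m h) = Pp lam r (m + lam i) (pd s i h) := by
  apply MvPolynomial.ext
  intro d
  obtain ⟨α, rfl⟩ := Finsupp.equivFunOnFinite.symm.surjective d
  have h1 : (Finsupp.equivFunOnFinite.symm α + Finsupp.single i 1)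
      = Finsupp.equivFunOnFinite.symm (α + Pi.single i 1) := by
      ext j; simp [Finsupp.single_apply, Pi.single_apply, eq_comm]
  have h2 : wt lam (α + Pi.single i 1) = wt lam α + lam i := by
    simp [wt, add_mul, Finset.sum_add_distrib, Pi.single_apply]
  rw [MvPolynomial.coeff_pderiv, h1, coeff_Pp hpos, coeff_Pp hpos, h2, tc_succ hh]
  have h3 : (wt lam α + lam i + m = r) ↔ (wt lam α + (m + lam i) = r) := by omega
  by_cases h4 : wt lam α + (m + lam i) = r
  · rw [if_pos h4, if_pos (h3.2 h4)]; simp [mul_comm]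
  · rw [if_neg h4, if_neg (fun h => h4 (h3.1 h))]; simp

theorem Pp_lin (hpos : ∀ i, 0 < lam i) (r m : ℕ) (h g : (Fin s → ℝ) → ℝ) (hh : Sm h) (hg : Sm g)
    (c : ℝ) : Pp lam r m (fun x => h x + c * g x) = Pp lam r m h + MvPolynomial.C c * Pp lam r m g := by
  apply MvPolynomial.ext
  intro d
  obtain ⟨α, rfl⟩ := Finsupp.equivFunOnFinite.symm.surjective d
  rw [MvPolynomial.coeff_add, MvPolynomial.coeff_C_mul, coeff_Pp hpos, coeff_Pp hpos, coeff_Pp hpos,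
    tc_lin hh hg]
  split_ifs <;> simp

theorem Pp_congr (r m : ℕ) (h g : (Fin s → ℝ) → ℝ) (e : h =ᶠ[𝓝 0] g) :
    Pp lam r m h = Pp lam r m g := by
  unfold Pp
  simp only [tc_congr _ e]

end asym


section forms
variable {s k : ℕ}

abbrev RF (s k : ℕ) := (Fin s → ℝ) → (Fin k → Fin s → ℝ) → ℝ

def EE (ω ω' : RF s k) : Prop := ∀ᶠ x in 𝓝 (0 : Fin s → ℝ), ∀ v, ω x v = ω' x v

theorem EE.symm {ω ω' : RF s k} (h : EE ω ω') : EE ω' ω := h.mono fun _ hx v => (hx v).symm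

theorem EE.trans {ω ω' ω'' : RF s k} (h : EE ω ω') (h' : EE ω' ω'') : EE ω ω'' := by
  filter_upwards [h, h'] with x a b v
  rw [a, b]

theorem EE.add {ω ω' η η' : RF s k} (h : EE ω ω') (h' : EE η η') : EE (ω + η) (ω' + η') := by
  filter_upwards [h, h'] with x a b v
  simp only [Pi.add_apply, a, b]

theorem EE.sum {ι : Type*} {t : Finset ι} {F G : ι → RF s k} (h : ∀ i ∈ t, EE (F i) (G i)) :
    EE (∑ i ∈ t, F i) (∑ i ∈ t, G i) := by
  have := (Filter.eventually_all_finset t).2 h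
  filter_upwards [this] with x a v
  simp only [Finset.sum_apply]
  exact Finset.sum_congr rfl fun i hi => a i hi v

theorem EE.coef {ω ω' : RF s k} (h : EE ω ω') (v : Fin k → Fin s → ℝ) :
    (fun x => ω x v) =ᶠ[𝓝 0] fun x => ω' x v := h.mono fun _ hx => hx v

def altOf {ω : FormK s k} (hω : IsFormK s k ω) (x : Fin s → ℝ) : (Fin s → ℝ) [⋀^Fin k]→ₗ[ℝ] ℝ where
  toFun v := ω x v
  map_update_add' := by
    intro inst v i a b
    have := hω.1 x v i a b 1
    rw [Subsingleton.elim inst (instDecidableEqFin k)]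
    simpa using this
  map_update_smul' := by
    intro inst v i c a
    have h0 := hω.1 x v i 0 0 1
    have := hω.1 x v i 0 a c
    rw [Subsingleton.elim inst (instDecidableEqFin k)]
    simp at h0
    simpa [h0] using this
  map_eq_zero_of_eq' := by
    intro v i j hv hij
    exact hω.2.1 x v ⟨i, j, hij, hv⟩

theorem IsFormK.sm {ω : FormK s k} (hω : IsFormK s k ω) (v : Fin k → Fin s → ℝ) :
    Sm (fun x => ω x v) := Sm_iff.1 (hω.2.2 v)

theorem isForm_of_alt (A : (Fin s → ℝ) → ((Fin s → ℝ) [⋀^Fin k]→ₗ[ℝ] ℝ))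
    (hs : ∀ v, Sm (fun x => A x v)) : IsFormK s k (fun x v => A x v) := by
  refine ⟨?_, ?_, fun v => Sm_iff.2 (hs v)⟩
  · intro x v i a b c
    show A x _ = A x _ + c * A x _
    rw [AlternatingMap.map_update_add, AlternatingMap.map_update_smul, smul_eq_mul]
  · rintro x v ⟨i, j, hij, hv⟩
    exact (A x).map_eq_zero_of_eq v hv hij

def eI (I : Fin k → Fin s) : Fin k → Fin s → ℝ := fun j => Pi.single (I j) (1 : ℝ)

theorem alt_ext {A B : (Fin s → ℝ) [⋀^Fin k]→ₗ[ℝ] ℝ}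
    (h : ∀ I : Fin k → Fin s, StrictMono I → A (eI I) = B (eI I)) : A = B := by
  apply Module.Basis.ext_alternating (Pi.basisFun ℝ (Fin s))
  intro L hL
  have hmono : StrictMono (L ∘ Tuple.sort L) :=
    (Tuple.monotone_sort L).strictMono_of_injective (hL.comp (Tuple.sort L).injective)
  have h1 := h _ hmono
  have h2 : (eI (L ∘ Tuple.sort L) : Fin k → Fin s → ℝ) = (eI L) ∘ Tuple.sort L := rfl
  rw [h2, AlternatingMap.map_perm, AlternatingMap.map_perm] at h1
  have h3 : A (eI L) = B (eI L) := by
    rcases Int.units_eq_one_or (Equiv.Perm.sign (Tuple.sort L)) with h | h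
    · simpa [h] using h1
    · simpa [h] using h1
  simpa [eI, funext_iff] using (show (A fun i => Pi.single (L i) 1) = B fun i => Pi.single (L i) 1 from h3)

/-- the form `h dg_1 ∧ … ∧ dg_k` -/
def GF (h : (Fin s → ℝ) → ℝ) (g : Fin k → (Fin s → ℝ) → ℝ) : RF s k :=
  fun x v => h x * Matrix.det (Matrix.of fun a b : Fin k => fderiv ℝ (g b) x (v a))

def gA (h : (Fin s → ℝ) → ℝ) (g : Fin k → (Fin s → ℝ) → ℝ) (x : Fin s → ℝ) :
    (Fin s → ℝ) [⋀^Fin k]→ₗ[ℝ] ℝ :=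
  h x • (Matrix.detRowAlternating (R := ℝ) (n := Fin k)).compLinearMap
    (LinearMap.pi fun b => (fderiv ℝ (g b) x).toLinearMap)

theorem gA_apply (h : (Fin s → ℝ) → ℝ) (g : Fin k → (Fin s → ℝ) → ℝ) (x : Fin s → ℝ)
    (v : Fin k → Fin s → ℝ) : gA h g x v = GF h g x v := rfl

theorem GF_sm {h : (Fin s → ℝ) → ℝ} {g : Fin k → (Fin s → ℝ) → ℝ} (hh : Sm h)
    (hg : ∀ b, Sm (g b)) (v : Fin k → Fin s → ℝ) : Sm (fun x => GF h g x v) := by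
  unfold GF
  simp only [Matrix.det_apply', Matrix.of_apply]
  exact hh.mul (Sm.sum fun σ _ => (Sm.const _).mul (Sm.prod fun i _ => (hg _).fderiv_apply _))

theorem GF_isForm {h : (Fin s → ℝ) → ℝ} {g : Fin k → (Fin s → ℝ) → ℝ} (hh : Sm h)
    (hg : ∀ b, Sm (g b)) : IsFormK s k (GF h g) :=
  isForm_of_alt (gA h g) (GF_sm hh hg)

def co (J : Fin k → Fin s) : Fin k → (Fin s → ℝ) → ℝ := fun j y => y (J j)

theorem co_sm (J : Fin k → Fin s) (b : Fin k) : Sm (co J b) := Sm.coord _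

theorem fd_co (J : Fin k → Fin s) (b : Fin k) (x w : Fin s → ℝ) :
    fderiv ℝ (co J b) x w = w (J b) := by
  unfold co
  rw [(hasFDerivAt_apply (J b) x).fderiv]; rfl

theorem GF_co (h : (Fin s → ℝ) → ℝ) (J : Fin k → Fin s) (x : Fin s → ℝ)
    (v : Fin k → Fin s → ℝ) :
    GF h (co J) x v = h x * Matrix.det (Matrix.of fun a b : Fin k => v a (J b)) := by
  simp only [GF, fd_co]

theorem det_eI (I J : Fin k → Fin s) (hI : StrictMono I) (hJ : StrictMono J) :
    Matrix.det (Matrix.of fun a b : Fin k => (eI I a (J b) : ℝ)) = if J = I then 1 else 0 := by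
  split_ifs with hIJ
  · subst hIJ
    have : (Matrix.of fun a b : Fin k => (eI J a (J b) : ℝ)) = 1 := by
      ext a b
      simp only [Matrix.of_apply, eI, Matrix.one_apply, Pi.single_apply, hJ.injective.eq_iff]
      simp only [eq_comm]
    rw [this, Matrix.det_one]
  · have : ∃ a, ∀ b, J b ≠ I a := by
      by_contra hcon
      push Not at hcon
      apply hIJ
      choose F hF using hcon
      have hFi : Function.Injective F := by
        intro a a' h
        apply hI.injective
        rw [← hF a, ← hF a', h]
      have hFs : Function.Surjective F := Finite.surjective_of_injective hFi
      apply StrictMono.range_inj hJ hI |>.1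
      ext y
      constructor
      · rintro ⟨b, rfl⟩
        obtain ⟨a, rfl⟩ := hFs b
        exact ⟨a, (hF a).symm⟩
      · rintro ⟨a, rfl⟩
        exact ⟨F a, hF a⟩
    obtain ⟨a, ha⟩ := this
    apply Matrix.det_eq_zero_of_row_eq_zero a
    intro b
    simp [eI, Pi.single_apply, ha b]

open scoped Classical in
def SI (s k : ℕ) : Finset (Fin k → Fin s) := Finset.univ.filter StrictMono

theorem mem_SI (J : Fin k → Fin s) : J ∈ SI s k ↔ StrictMono J := by simp [SI]

theorem sum_co_eI (c : (Fin k → Fin s) → (Fin s → ℝ) → ℝ) (I : Fin k → Fin s) (hI : StrictMono I)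
    (x : Fin s → ℝ) : ∑ J ∈ SI s k, GF (c J) (co J) x (eI I) = c I x := by
  classical
  have : ∀ J ∈ SI s k, GF (c J) (co J) x (eI I) = if J = I then c I x else 0 := by
    intro J hJ
    rw [GF_co, det_eI I J hI ((mem_SI J).1 hJ)]
    split_ifs with h
    · rw [h, mul_one]
    · rw [mul_zero]
  rw [Finset.sum_congr rfl this, Finset.sum_ite_eq', if_pos ((mem_SI I).2 hI)]

theorem altsum_apply {ι : Type*} (t : Finset ι) (F : ι → ((Fin s → ℝ) [⋀^Fin k]→ₗ[ℝ] ℝ))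
    (v : Fin k → Fin s → ℝ) : (∑ i ∈ t, F i) v = ∑ i ∈ t, F i v := by
  classical
  induction t using Finset.induction_on with
  | empty => simp
  | insert a t ha ih => rw [Finset.sum_insert ha, Finset.sum_insert ha, AlternatingMap.add_apply, ih]

theorem alt_expand (A : (Fin s → ℝ) [⋀^Fin k]→ₗ[ℝ] ℝ) (x : Fin s → ℝ) :
    A = ∑ J ∈ SI s k, gA (fun _ => A (eI J)) (co J) x := by
  apply alt_ext
  intro I hI
  have h1 := sum_co_eI (fun J _ => A (eI J)) I hI x
  rw [altsum_apply]
  simp only [gA_apply]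
  exact h1.symm

theorem form_expand {ω : FormK s k} (hω : IsFormK s k ω) (x : Fin s → ℝ)
    (v : Fin k → Fin s → ℝ) :
    ω x v = ∑ J ∈ SI s k, GF (fun y => ω y (eI J)) (co J) x v := by
  have h1 := congrArg (fun B : (Fin s → ℝ) [⋀^Fin k]→ₗ[ℝ] ℝ => B v) (alt_expand (altOf hω x) x)
  exact h1.trans (altsum_apply _ _ _)

theorem form_expand' {ω : FormK s k} (hω : IsFormK s k ω) :
    (ω : RF s k) = ∑ J ∈ SI s k, GF (fun y => ω y (eI J)) (co J) := by
  funext x v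
  rw [form_expand hω]
  simp only [Finset.sum_apply]

theorem form_diff {ω : FormK s k} (hω : IsFormK s k ω) :
    ∀ᶠ x in 𝓝 (0 : Fin s → ℝ), ∀ v, DifferentiableAt ℝ (fun y => ω y v) x := by
  have h1 : ∀ᶠ x in 𝓝 (0 : Fin s → ℝ), ∀ J ∈ SI s k,
      DifferentiableAt ℝ (fun y => ω y (eI J)) x :=
    (Filter.eventually_all_finset _).2 fun J _ => (hω.sm _).diff
  filter_upwards [h1] with x hx v
  have h2 : (fun y => ω y v) = fun y => ∑ J ∈ SI s k, ω y (eI J) *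
      Matrix.det (Matrix.of fun a b : Fin k => v a (J b)) := by
    funext y
    rw [form_expand hω]
    simp only [GF_co]
  rw [h2]
  exact DifferentiableAt.fun_sum fun J hJ => (hx J hJ).mul_const _

def cs (b : (Fin s → ℝ) → ℝ) (G : Fin k → (Fin s → ℝ) → ℝ) : Fin (k + 1) → (Fin s → ℝ) → ℝ :=
  Fin.cons (α := fun _ => (Fin s → ℝ) → ℝ) b G

theorem cs_sm {b : (Fin s → ℝ) → ℝ} {G : Fin k → (Fin s → ℝ) → ℝ} (hb : Sm b)
    (hG : ∀ c, Sm (G c)) (c : Fin (k + 1)) : Sm (cs b G c) := by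
  refine Fin.cases ?_ (fun j => ?_) c
  · exact hb
  · exact hG j

theorem GF_cs (h b : (Fin s → ℝ) → ℝ) (G : Fin k → (Fin s → ℝ) → ℝ) (x : Fin s → ℝ)
    (v : Fin (k + 1) → Fin s → ℝ) :
    GF h (cs b G) x v = h x * ∑ i : Fin (k + 1), (-1 : ℝ) ^ (i : ℕ) * fderiv ℝ b x (v i) *
      Matrix.det (Matrix.of fun a c : Fin k => fderiv ℝ (G c) x (v (i.succAbove a))) := by
  unfold GF
  rw [Matrix.det_succ_column_zero]
  rfl

theorem GF_move (h : (Fin s → ℝ) → ℝ) (g : Fin (k + 1) → (Fin s → ℝ) → ℝ) (i : Fin (k + 1)) :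
    GF h g = (-1 : ℝ) ^ (i : ℕ) • GF h (cs (g i) (fun c => g (i.succAbove c))) := by
  funext x v
  simp only [Pi.smul_apply, smul_eq_mul]
  rw [GF_cs]
  unfold GF
  rw [Matrix.det_succ_column _ i, mul_left_comm]
  congr 1
  rw [Finset.mul_sum]
  apply Finset.sum_congr rfl
  intro a _
  rw [pow_add, ← mul_assoc, ← mul_assoc, mul_comm ((-1 : ℝ) ^ (i : ℕ))]
  rfl

theorem fderiv_pd (b : (Fin s → ℝ) → ℝ) (x w : Fin s → ℝ) :
    fderiv ℝ b x w = ∑ j, pd s j b x * w j := by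
  have hv : w = ∑ i, w i • (Pi.single i (1 : ℝ) : Fin s → ℝ) := by
    simpa using (pi_eq_sum_univ' w)
  conv_lhs => rw [hv, map_sum]
  apply Finset.sum_congr rfl
  intro j _
  rw [map_smul, smul_eq_mul, mul_comm]; rfl

theorem det_pd (G : Fin k → (Fin s → ℝ) → ℝ) (x : Fin s → ℝ) (v : Fin k → Fin s → ℝ) :
    Matrix.det (Matrix.of fun a c : Fin k => fderiv ℝ (G c) x (v a))
      = ∑ L : Fin k → Fin s, (∏ c, pd s (L c) (G c) x) *
          Matrix.det (Matrix.of fun a c : Fin k => v a (L c)) := by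
  rw [← Matrix.det_transpose]
  have h1 : (Matrix.of fun a c : Fin k => fderiv ℝ (G c) x (v a)).transpose
      = fun c => ∑ j, pd s j (G c) x • (fun a => v a j) := by
    funext c a
    simp [Matrix.transpose_apply, fderiv_pd (G c) x (v a)]
  have h2 := (Matrix.detRowAlternating (R := ℝ) (n := Fin k)).toMultilinearMap.map_sum
    (fun c (j : Fin s) => pd s j (G c) x • (fun a => v a j))
  rw [h1]
  refine Eq.trans h2 ?_
  apply Finset.sum_congr rfl
  intro L _
  rw [MultilinearMap.map_smul_univ, smul_eq_mul]
  congr 1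
  rw [← Matrix.det_transpose]
  rfl

theorem GF_cs_expand (h b : (Fin s → ℝ) → ℝ) (G : Fin k → (Fin s → ℝ) → ℝ) :
    GF h (cs b G) = ∑ L : Fin k → Fin s,
      GF (fun y => h y * ∏ c, pd s (L c) (G c) y) (cs b (co L)) := by
  funext x v
  simp only [Finset.sum_apply]
  simp only [GF_cs, det_pd G, fd_co, Finset.mul_sum]
  rw [Finset.sum_comm]
  apply Finset.sum_congr rfl; intro L _
  apply Finset.sum_congr rfl; intro i _
  ring

theorem ext_GF_co (h : (Fin s → ℝ) → ℝ) (hh : Sm h) (L : Fin k → Fin s) :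
    EE (extDK s k (GF h (co L))) (GF (fun _ => 1) (cs h (co L))) := by
  filter_upwards [hh.diff] with x hx v
  rw [GF_cs, one_mul]
  unfold extDK
  apply Finset.sum_congr rfl
  intro i _
  simp only [GF_co, fd_co]
  rw [fderiv_mul_const hx]
  simp only [_root_.smul_apply, smul_eq_mul]
  ring

theorem extDK_lin {β β' : FormK s k} (hβ : IsFormK s k β) (hβ' : IsFormK s k β') (c : ℝ) :
    EE (extDK s k (fun x v => β x v + c * β' x v))
      (fun x v => extDK s k β x v + c * extDK s k β' x v) := by
  filter_upwards [form_diff hβ, form_diff hβ'] with x a b v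
  simp only [extDK]
  rw [Finset.mul_sum, ← Finset.sum_add_distrib]
  apply Finset.sum_congr rfl
  intro i _
  rw [fderiv_fun_add (a _) ((b _).const_mul c), fderiv_const_mul (b _)]
  simp only [_root_.add_apply, _root_.smul_apply, smul_eq_mul]
  ring

theorem isForm_lin {β β' : FormK s k} (hβ : IsFormK s k β) (hβ' : IsFormK s k β') (c : ℝ) :
    IsFormK s k (fun x v => β x v + c * β' x v) :=
  isForm_of_alt (fun x => altOf hβ x + c • altOf hβ' x)
    fun v => (hβ.sm v).add ((Sm.const c).mul (hβ'.sm v))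

theorem isForm_zero : IsFormK s k (fun _ _ => 0) :=
  isForm_of_alt (fun _ => 0) fun _ => Sm.const 0

theorem extDK_expand {β : FormK s k} (hβ : IsFormK s k β) :
    EE (extDK s k β) (∑ J ∈ SI s k, GF (fun _ => 1) (cs (fun y => β y (eI J)) (co J))) := by
  have h1 : ∀ᶠ x in 𝓝 (0 : Fin s → ℝ), ∀ J ∈ SI s k,
      DifferentiableAt ℝ (fun y => β y (eI J)) x :=
    (Filter.eventually_all_finset _).2 fun J _ => (hβ.sm _).diff
  filter_upwards [h1] with x hx v
  simp only [Finset.sum_apply, GF_cs, one_mul, extDK]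
  rw [Finset.sum_comm]
  apply Finset.sum_congr rfl
  intro i _
  have h2 : (fun y => β y fun j => v (i.succAbove j)) = fun y => ∑ J ∈ SI s k, β y (eI J) *
      Matrix.det (Matrix.of fun a b : Fin k => v (i.succAbove a) (J b)) := by
    funext y
    rw [form_expand hβ]
    simp only [GF_co]
  rw [h2, fderiv_fun_sum fun J hJ => (hx J hJ).mul_const _, _root_.sum_apply, Finset.mul_sum]
  apply Finset.sum_congr rfl
  intro J hJ
  rw [fderiv_mul_const (hx J hJ)]
  simp only [_root_.smul_apply, smul_eq_mul, fd_co]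
  ring

end forms


section zero
variable {s k : ℕ} {f : ℝ → Fin s → ℝ}

theorem ZeroARK.lin {ω ω' : FormK s (k + 1)} (h : ZeroARK s k ω f) (h' : ZeroARK s k ω' f) (c : ℝ) :
    ZeroARK s k (fun x v => ω x v + c * ω' x v) f := by
  obtain ⟨α, β, hα, hβ, vα, vβ, e⟩ := h
  obtain ⟨α', β', hα', hβ', vα', vβ', e'⟩ := h'
  refine ⟨fun x v => α x v + c * α' x v, fun x v => β x v + c * β' x v,
    isForm_lin hα hα' c, isForm_lin hβ hβ' c, ?_, ?_, ?_⟩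
  · filter_upwards [vα, vα'] with t a b v
    show α (f t) v + c * α' (f t) v = 0
    rw [a, b]; simp
  · filter_upwards [vβ, vβ'] with t a b v
    show β (f t) v + c * β' (f t) v = 0
    rw [a, b]; simp
  · filter_upwards [e, e', extDK_lin hβ hβ' c] with x a b d v
    have d' : extDK s k (fun x v => β x v + c * β' x v) x v
        = extDK s k β x v + c * extDK s k β' x v := d v
    show ω x v + c * ω' x v = (α x v + c * α' x v) + _
    rw [a, b, d']
    ring

theorem ZeroARK.zero : ZeroARK s k (fun _ _ => 0) f := by
  refine ⟨fun _ _ => 0, fun _ _ => 0, isForm_zero, isForm_zero, ?_, ?_, ?_⟩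
  · exact Eventually.of_forall fun _ _ => rfl
  · exact Eventually.of_forall fun _ _ => rfl
  · refine Eventually.of_forall fun x v => ?_
    simp [extDK]

/-- forms with zero algebraic restriction -/
def Zm (f : ℝ → Fin s → ℝ) : Submodule ℝ (RF s (k + 1)) where
  carrier := {ω | ZeroARK s k ω f}
  zero_mem' := ZeroARK.zero
  add_mem' := by
    intro a b ha hb
    have := ZeroARK.lin ha hb 1
    simp only [one_mul] at this
    exact this
  smul_mem' := by
    intro c a ha
    have := ZeroARK.lin (ZeroARK.zero (s := s) (k := k) (f := f)) ha c
    simp only [zero_add] at this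
    exact this

theorem mem_Zm {ω : RF s (k + 1)} : ω ∈ Zm f ↔ ZeroARK s k ω f := Iff.rfl

theorem Zm_congr {ω ω' : RF s (k + 1)} (e : EE ω' ω) (h : ω ∈ Zm f) : ω' ∈ Zm f := by
  obtain ⟨α, β, hα, hβ, vα, vβ, e'⟩ := h
  refine ⟨α, β, hα, hβ, vα, vβ, ?_⟩
  filter_upwards [e, e'] with x a b v
  exact (a v).trans (b v)

variable (f) in
def Va (h : (Fin s → ℝ) → ℝ) : Prop := ∀ᶠ t in 𝓝 (0 : ℝ), h (f t) = 0

theorem Z1 {h : (Fin s → ℝ) → ℝ} {g : Fin (k + 1) → (Fin s → ℝ) → ℝ} (hh : Sm h)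
    (hg : ∀ b, Sm (g b)) (hv : Va f h) : GF h g ∈ Zm f := by
  refine ⟨GF h g, fun _ _ => 0, GF_isForm hh hg, isForm_zero, ?_, ?_, ?_⟩
  · filter_upwards [hv] with t ht v
    simp [GF, ht]
  · exact Eventually.of_forall fun _ _ => rfl
  · refine Eventually.of_forall fun x v => ?_
    simp [extDK]

theorem Z2 {H b : (Fin s → ℝ) → ℝ} (hH : Sm H) (hb : Sm b) (hv : Va f b) (L : Fin k → Fin s) :
    GF H (cs b (co L)) ∈ Zm f := by
  have h1 : GF (fun _ => (1 : ℝ)) (cs (fun y => H y * b y) (co L)) ∈ Zm f := by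
    refine Zm_congr (ext_GF_co _ (hH.mul hb) L).symm ?_
    refine ⟨fun _ _ => 0, GF (fun y => H y * b y) (co L), isForm_zero,
      GF_isForm (hH.mul hb) (co_sm L), ?_, ?_, ?_⟩
    · exact Eventually.of_forall fun _ _ => rfl
    · filter_upwards [hv] with t ht v
      simp [GF, ht]
    · refine Eventually.of_forall fun x v => ?_
      simp
  have h2 : GF b (cs H (co L)) ∈ Zm f := Z1 hb (cs_sm hH (co_sm L)) hv
  refine Zm_congr ?_ (Submodule.sub_mem _ h1 h2)
  filter_upwards [hH.diff, hb.diff] with x a c v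
  simp only [Pi.sub_apply, GF_cs, one_mul]
  rw [Finset.mul_sum, Finset.mul_sum, ← Finset.sum_sub_distrib]
  apply Finset.sum_congr rfl
  intro i _
  rw [fderiv_fun_mul a c]
  simp only [_root_.add_apply, _root_.smul_apply, smul_eq_mul]
  ring

theorem Z3 {h : (Fin s → ℝ) → ℝ} {g : Fin (k + 1) → (Fin s → ℝ) → ℝ} (hh : Sm h)
    (hg : ∀ b, Sm (g b)) (i : Fin (k + 1)) (hv : Va f (g i)) : GF h g ∈ Zm f := by
  rw [GF_move h g i, GF_cs_expand]
  apply Submodule.smul_mem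
  apply Submodule.sum_mem
  intro L _
  exact Z2 (hh.mul (Sm.prod fun c _ => (hg _).pd _)) (hg i) hv L

theorem Zm_decomp {ω : RF s (k + 1)} (h : ω ∈ Zm f) :
    ∃ (a : (Fin (k + 1) → Fin s) → (Fin s → ℝ) → ℝ) (b : (Fin k → Fin s) → (Fin s → ℝ) → ℝ),
      (∀ J, Sm (a J)) ∧ (∀ J, Va f (a J)) ∧ (∀ J, Sm (b J)) ∧ (∀ J, Va f (b J)) ∧
      EE ω (∑ J ∈ SI s (k + 1), GF (a J) (co J)
        + ∑ J ∈ SI s k, GF (fun _ => 1) (cs (b J) (co J))) := by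
  obtain ⟨α, β, hα, hβ, vα, vβ, e⟩ := h
  refine ⟨fun J x => α x (eI J), fun J x => β x (eI J), fun J => hα.sm _, fun J => vα.mono fun t ht => ht _,
    fun J => hβ.sm _, fun J => vβ.mono fun t ht => ht _, ?_⟩
  rw [← form_expand' hα]
  filter_upwards [e, extDK_expand hβ] with x a b v
  rw [a, b]; rfl

/-- pullback -/
theorem pull_GF {Φ : (Fin s → ℝ) → (Fin s → ℝ)} (h0 : Φ 0 = 0)
    (hΦ : ∀ᶠ x in 𝓝 (0 : Fin s → ℝ), ContDiffAt ℝ (⊤ : ℕ∞) Φ x)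
    (h : (Fin s → ℝ) → ℝ) (g : Fin k → (Fin s → ℝ) → ℝ) (hg : ∀ b, Sm (g b)) :
    EE (pullK s k Φ (GF h g)) (GF (fun x => h (Φ x)) (fun b x => g b (Φ x))) := by
  have hc : Tendsto Φ (𝓝 0) (𝓝 0) := by
    have := hΦ.self_of_nhds.continuousAt
    rw [ContinuousAt, h0] at this; exact this
  have h1 : ∀ᶠ x in 𝓝 (0 : Fin s → ℝ), ∀ b, DifferentiableAt ℝ (g b) x :=
    Filter.eventually_all.2 fun b => (hg b).diff
  filter_upwards [hΦ, hc.eventually h1] with x a b v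
  have ha : DifferentiableAt ℝ Φ x := a.differentiableAt (by simp)
  simp only [pullK, GF]
  congr 3
  funext i j
  have := fderiv_comp x (b j) ha
  rw [show (fun x => g j (Φ x)) = g j ∘ Φ from rfl, this]
  rfl

theorem pull_EE {Φ : (Fin s → ℝ) → (Fin s → ℝ)} (h0 : Φ 0 = 0)
    (hΦ : ∀ᶠ x in 𝓝 (0 : Fin s → ℝ), ContDiffAt ℝ (⊤ : ℕ∞) Φ x) {ω ω' : RF s k} (e : EE ω ω') :
    EE (pullK s k Φ ω) (pullK s k Φ ω') := by
  have hc : Tendsto Φ (𝓝 0) (𝓝 0) := by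
    have := hΦ.self_of_nhds.continuousAt
    rw [ContinuousAt, h0] at this; exact this
  filter_upwards [hc.eventually e] with x a v
  exact a _

def pl (Φ : (Fin s → ℝ) → (Fin s → ℝ)) (ω : RF s k) : RF s k := pullK s k Φ ω

theorem pull_add (Φ : (Fin s → ℝ) → (Fin s → ℝ)) (ω ω' : RF s k) :
    pl Φ (ω + ω') = pl Φ ω + pl Φ ω' := rfl

theorem pull_sum {ι : Type*} (t : Finset ι) (Φ : (Fin s → ℝ) → (Fin s → ℝ)) (F : ι → RF s k) :
    pl Φ (∑ i ∈ t, F i) = ∑ i ∈ t, pl Φ (F i) := by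
  funext x v
  simp only [Finset.sum_apply]
  show (∑ i ∈ t, F i) _ _ = _
  simp only [Finset.sum_apply]
  rfl

theorem Va.pull {Φ : (Fin s → ℝ) → (Fin s → ℝ)} {φ : ℝ → ℝ} (hφ : Tendsto φ (𝓝 0) (𝓝 0))
    (hconj : ∀ᶠ t in 𝓝 (0 : ℝ), Φ (f t) = f (φ t)) {h : (Fin s → ℝ) → ℝ} (hv : Va f h) :
    Va f (fun x => h (Φ x)) := by
  filter_upwards [hconj, hφ.eventually hv] with t a b
  rw [a, b]

theorem pull_Zm {Φ : (Fin s → ℝ) → (Fin s → ℝ)} {φ : ℝ → ℝ} (h0 : Φ 0 = 0)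
    (hΦ : ∀ᶠ x in 𝓝 (0 : Fin s → ℝ), ContDiffAt ℝ (⊤ : ℕ∞) Φ x) (hφ : Tendsto φ (𝓝 0) (𝓝 0))
    (hconj : ∀ᶠ t in 𝓝 (0 : ℝ), Φ (f t) = f (φ t)) {ω : RF s (k + 1)} (hω : ω ∈ Zm f) :
    pl Φ ω ∈ Zm f := by
  obtain ⟨a, b, sa, va, sb, vb, e⟩ := Zm_decomp hω
  refine Zm_congr (ω := pl Φ _) (pull_EE h0 hΦ e) ?_
  rw [pull_add, pull_sum, pull_sum]
  refine Submodule.add_mem _ (Submodule.sum_mem _ fun J _ => ?_) (Submodule.sum_mem _ fun J _ => ?_)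
  · refine Zm_congr (pull_GF h0 hΦ _ _ (co_sm J)) ?_
    exact Z1 ((sa J).comp h0 hΦ) (fun b => (co_sm J b).comp h0 hΦ) ((va J).pull hφ hconj)
  · refine Zm_congr (pull_GF h0 hΦ _ _ (cs_sm (sb J) (co_sm J))) ?_
    refine Z3 (Sm.const _) (fun b => (cs_sm (sb J) (co_sm J) b).comp h0 hΦ) 0 ?_
    exact (vb J).pull hφ hconj

end zero

section parts
variable {s k : ℕ} {f : ℝ → Fin s → ℝ} {lam : Fin s → ℕ}

variable (lam) in
def lS (J : Fin k → Fin s) : ℕ := ∑ j, lam (J j)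

variable (lam) in
def qh (r : ℕ) (ω : RF s k) : RF s k :=
  ∑ J ∈ SI s k, GF (fun y => MvPolynomial.eval y (Pp lam r (lS lam J) (fun x => ω x (eI J)))) (co J)

theorem qh_eq (hpos : ∀ i, 0 < lam i) (r : ℕ) (ω : RF s k) :
    (qhPartK s k lam r ω : RF s k) = qh lam r ω := by
  classical
  funext x v
  unfold qh qhPartK
  simp only [Finset.sum_apply, GF_co]
  rw [SI, Finset.sum_filter]
  apply Finset.sum_congr rfl
  intro J _
  by_cases hJ : StrictMono J
  · rw [if_pos hJ, if_pos hJ, ← eval_Pp hpos]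
    rfl
  · rw [if_neg hJ, if_neg hJ]

theorem qh_eI (r : ℕ) (ω : RF s k) (I : Fin k → Fin s) (hI : StrictMono I) (x : Fin s → ℝ) :
    qh lam r ω x (eI I) = MvPolynomial.eval x (Pp lam r (lS lam I) (fun x => ω x (eI I))) := by
  unfold qh
  simp only [Finset.sum_apply]
  exact sum_co_eI (fun J y => MvPolynomial.eval y (Pp lam r (lS lam J) (fun x => ω x (eI J)))) I hI x

theorem isForm_sum {ι : Type*} (t : Finset ι) (h : ι → (Fin s → ℝ) → ℝ)
    (g : ι → Fin k → (Fin s → ℝ) → ℝ) (hh : ∀ i, Sm (h i)) (hg : ∀ i b, Sm (g i b)) :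
    IsFormK s k (∑ i ∈ t, GF (h i) (g i) : RF s k) := by
  have h1 := isForm_of_alt (fun x => ∑ i ∈ t, gA (h i) (g i) x) (by
    intro v
    simp only [altsum_apply, gA_apply]
    exact Sm.sum fun i _ => GF_sm (hh i) (hg i) v)
  have h2 : (∑ i ∈ t, GF (h i) (g i) : RF s k) = fun x v => (∑ i ∈ t, gA (h i) (g i) x) v := by
    funext x v
    simp only [altsum_apply, gA_apply, Finset.sum_apply]
  rw [h2]
  exact h1

theorem qh_isForm (r : ℕ) (ω : RF s k) : IsFormK s k (qh lam r ω) :=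
  isForm_sum _ _ _ (fun _ => Sm.eval _) (fun J => co_sm J)

def SF (ω : RF s k) : Prop := ∀ I : Fin k → Fin s, Sm (fun x => ω x (eI I))

theorem qh_lin (hpos : ∀ i, 0 < lam i) (r : ℕ) (ω ω' : RF s k) (h : SF ω) (h' : SF ω') (c : ℝ) :
    qh lam r (ω + c • ω') = qh lam r ω + c • qh lam r ω' := by
  funext x v
  simp only [qh, Pi.add_apply, Pi.smul_apply, Finset.sum_apply, smul_eq_mul, GF_co]
  rw [Finset.mul_sum, ← Finset.sum_add_distrib]
  apply Finset.sum_congr rfl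
  intro J _
  rw [Pp_lin hpos _ _ _ _ (h J) (h' J)]
  simp only [map_add, map_mul, MvPolynomial.eval_C]
  ring

theorem qh_congr (r : ℕ) {ω ω' : RF s k} (e : EE ω ω') : qh lam r ω = qh lam r ω' := by
  unfold qh
  apply Finset.sum_congr rfl
  intro J _
  rw [Pp_congr _ _ _ _ (e.coef (eI J))]

theorem SF.congr {ω ω' : RF s k} (h : SF ω) (e : EE ω' ω) : SF ω' := fun I => (h I).congr (e.coef _)

theorem SF.lin {ω ω' : RF s k} (h : SF ω) (h' : SF ω') (c : ℝ) : SF (ω + c • ω') :=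
  fun I => (h I).add ((Sm.const c).mul (h' I))

theorem IsFormK.sf {ω : FormK s k} (h : IsFormK s k ω) : SF (ω : RF s k) := fun I => h.sm _

theorem f_eq (hf : f = fun t i => t ^ lam i) (t : ℝ) : f t = dl lam t (fun _ => 1) := by
  rw [hf]; funext i; simp [dl]

theorem van_Pp (hpos : ∀ i, 0 < lam i) (hf : f = fun t i => t ^ lam i) {h : (Fin s → ℝ) → ℝ}
    (hh : Sm h) (hv : Va f h) (r m : ℕ) (t : ℝ) :
    MvPolynomial.eval (f t) (Pp lam r m h) = 0 := by
  by_cases hm : m ≤ r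
  · have h1 : Pp lam r m h = Pp lam (r - m) 0 h := by
      apply MvPolynomial.ext
      intro d
      obtain ⟨α, rfl⟩ := Finsupp.equivFunOnFinite.symm.surjective d
      rw [coeff_Pp hpos, coeff_Pp hpos]
      congr 1
      apply propext
      omega
    rw [h1, f_eq hf]
    have h2 := eval_Pp_dl (lam := lam) (r - m) 0 h t (fun _ => 1)
    rw [pow_zero, one_mul] at h2
    rw [h2, expand_zero hpos (r - m + 1) h hh (fun _ => 1) _ (r - m) (by omega), mul_zero]
    refine Asymptotics.IsBigO.mono ?_ nhdsWithin_le_nhds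
    have : (fun τ => h (dl lam τ fun _ => 1)) =ᶠ[𝓝 0] fun _ => 0 := by
      filter_upwards [hv] with τ hτ
      rw [← f_eq hf, hτ]
    exact this.trans_isBigO (Asymptotics.isBigO_zero _ _)
  · have : Pp lam r m h = 0 := by
      apply MvPolynomial.ext
      intro d
      obtain ⟨α, rfl⟩ := Finsupp.equivFunOnFinite.symm.surjective d
      rw [coeff_Pp hpos, if_neg (by omega), MvPolynomial.coeff_zero]
    rw [this, map_zero]

theorem qh_van (hpos : ∀ i, 0 < lam i) (hf : f = fun t i => t ^ lam i) {ω : FormK s k}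
    (hω : IsFormK s k ω) (hv : VanishesK s k ω f) (r : ℕ) : VanishesK s k (qh lam r ω) f := by
  refine Eventually.of_forall fun t v => ?_
  simp only [qh, Finset.sum_apply, GF_co]
  apply Finset.sum_eq_zero
  intro J _
  rw [van_Pp hpos hf (hω.sm _) (hv.mono fun t ht => ht _), zero_mul]

theorem Pp_sum (hpos : ∀ i, 0 < lam i) {ι : Type*} (t : Finset ι) (c : ι → ℝ)
    (F : ι → (Fin s → ℝ) → ℝ) (hF : ∀ i, Sm (F i)) (r m : ℕ) (x : Fin s → ℝ) :
    MvPolynomial.eval x (Pp lam r m (fun x => ∑ i ∈ t, c i * F i x))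
      = ∑ i ∈ t, c i * MvPolynomial.eval x (Pp lam r m (F i)) := by
  have : Pp lam r m (fun x => ∑ i ∈ t, c i * F i x) = ∑ i ∈ t, MvPolynomial.C (c i) * Pp lam r m (F i) := by
    apply MvPolynomial.ext
    intro d
    obtain ⟨α, rfl⟩ := Finsupp.equivFunOnFinite.symm.surjective d
    rw [coeff_Pp hpos, MvPolynomial.coeff_sum]
    simp only [MvPolynomial.coeff_C_mul, coeff_Pp hpos]
    rw [tc_sum t (fun i x => c i * F i x) (fun i => (Sm.const _).mul (hF i))]
    split_ifs
    · exact Finset.sum_congr rfl fun i _ => tc_smul (hF i) _ _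
    · simp
  rw [this, map_sum]
  simp

theorem extDK_sf {β : FormK s k} (hβ : IsFormK s k β) : SF (extDK s k β : RF s (k + 1)) := by
  intro I
  show Sm (fun x => ∑ i : Fin (k + 1), (-1 : ℝ) ^ (i : ℕ) *
      fderiv ℝ (fun y => β y (fun j => (eI I) (i.succAbove j))) x (eI I i))
  exact Sm.sum fun i _ => (Sm.const _).mul ((hβ.sm _).fderiv_apply _)

theorem qh_ext (hpos : ∀ i, 0 < lam i) {β : FormK s k} (hβ : IsFormK s k β) (r : ℕ) :
    EE (qh lam r (extDK s k β)) (extDK s k (qh lam r β)) := by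
  filter_upwards [extDK_expand (qh_isForm (lam := lam) r (β : RF s k))] with x hx v
  set A : (Fin s → ℝ) [⋀^Fin (k + 1)]→ₗ[ℝ] ℝ := altOf (qh_isForm (lam := lam) r (extDK s k β : RF s (k + 1))) x
  set B : (Fin s → ℝ) [⋀^Fin (k + 1)]→ₗ[ℝ] ℝ :=
    ∑ J ∈ SI s k, gA (fun _ => 1) (cs (fun y => qh lam r β y (eI J)) (co J)) x with hB
  have hBx : ∀ v, extDK s k (qh lam r β) x v = B v := by
    intro v
    rw [hx, hB, altsum_apply]
    simp only [gA_apply, Finset.sum_apply]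
  have hAB : A = B := by
    apply alt_ext
    intro I hI
    rw [← hBx]
    have h1 : A (eI I) = MvPolynomial.eval x (Pp lam r (lS lam I) (fun x => extDK s k β x (eI I))) :=
      qh_eI r _ I hI x
    rw [h1]
    have h2 : (fun x => extDK s k β x (eI I)) = fun x => ∑ i : Fin (k + 1), (-1 : ℝ) ^ (i : ℕ) *
        pd s (I i) (fun y => β y (eI (fun j => I (i.succAbove j)))) x := rfl
    rw [h2, Pp_sum hpos _ (fun i : Fin (k + 1) => (-1 : ℝ) ^ (i : ℕ)) _ (fun i => (hβ.sm _).pd _)]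
    unfold extDK
    apply Finset.sum_congr rfl
    intro i _
    congr 1
    have hIs : StrictMono (fun j => I (i.succAbove j)) := hI.comp (Fin.strictMono_succAbove i)
    have h3 : (fun y => qh lam r β y (fun j => (eI I) (i.succAbove j)))
        = fun y => MvPolynomial.eval y (Pp lam r (lS lam (fun j => I (i.succAbove j)))
          (fun x => β x (eI (fun j => I (i.succAbove j))))) := by
      funext y
      exact qh_eI r β _ hIs y
    rw [h3]
    have h4 := pd_eval (Pp lam r (lS lam (fun j => I (i.succAbove j)))
          (fun x => β x (eI (fun j => I (i.succAbove j))))) (I i) x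
    refine Eq.trans ?_ h4.symm
    rw [pderiv_Pp hpos _ _ _ (hβ.sm _)]
    congr 2
    unfold lS
    rw [Fin.sum_univ_succAbove _ i, add_comm]
  rw [hBx, ← hAB]
  rfl

def toR (ω : FormK s k) : RF s k := ω

theorem Zm_sf {ω : RF s (k + 1)} (h : ω ∈ Zm f) : SF ω := by
  obtain ⟨α, β, hα, hβ, vα, vβ, e⟩ := h
  have : SF (toR α + (1 : ℝ) • toR (extDK s k β)) := hα.sf.lin (extDK_sf hβ) 1
  refine this.congr ?_
  filter_upwards [e] with x hx v
  simp only [Pi.add_apply, Pi.smul_apply, one_smul]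
  exact hx v

theorem Zm_qh (hpos : ∀ i, 0 < lam i) (hf : f = fun t i => t ^ lam i) {ω : RF s (k + 1)}
    (h : ω ∈ Zm f) (r : ℕ) : qh lam r ω ∈ Zm f := by
  obtain ⟨α, β, hα, hβ, vα, vβ, e⟩ := h
  refine ⟨qh lam r α, qh lam r β, qh_isForm _ _, qh_isForm _ _, qh_van hpos hf hα vα r,
    qh_van hpos hf hβ vβ r, ?_⟩
  have e' : EE ω (toR α + (1 : ℝ) • toR (extDK s k β)) := by
    filter_upwards [e] with x hx v
    simp only [Pi.add_apply, Pi.smul_apply, one_smul]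
    exact hx v
  rw [qh_congr r e', qh_lin hpos r (toR α) (toR (extDK s k β)) hα.sf (extDK_sf hβ)]
  filter_upwards [qh_ext hpos hβ r] with x hx v
  rw [← hx]
  simp only [Pi.add_apply, one_smul]
  rfl

end parts


section filt
variable {s k : ℕ} {f : ℝ → Fin s → ℝ} {lam : Fin s → ℕ}

theorem SF.zero : SF (0 : RF s k) := fun _ => Sm.const 0

theorem qh_zero (hpos : ∀ i, 0 < lam i) (r : ℕ) : qh lam r (0 : RF s k) = 0 := by
  have := qh_lin hpos r (0 : RF s k) 0 SF.zero SF.zero 1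
  rw [smul_zero, add_zero, one_smul] at this
  exact left_eq_add.1 this

/-- filtration -/
def Fm (hpos : ∀ i, 0 < lam i) (f : ℝ → Fin s → ℝ) (r : ℕ) : Submodule ℝ (RF s (k + 1)) where
  carrier := {ω | SF ω ∧ ∀ q < r, qh lam q ω ∈ Zm f}
  zero_mem' := ⟨SF.zero, fun q _ => by rw [qh_zero hpos]; exact Submodule.zero_mem _⟩
  add_mem' := by
    rintro a b ⟨ha, ha'⟩ ⟨hb, hb'⟩
    refine ⟨?_, fun q hq => ?_⟩
    · have := ha.lin hb 1
      rwa [one_smul] at this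
    · have := qh_lin hpos q a b ha hb 1
      rw [one_smul, one_smul] at this
      rw [this]
      exact Submodule.add_mem _ (ha' q hq) (hb' q hq)
  smul_mem' := by
    rintro c b ⟨hb, hb'⟩
    refine ⟨?_, fun q hq => ?_⟩
    · have := SF.zero.lin hb c
      rwa [zero_add] at this
    · have := qh_lin hpos q 0 b SF.zero hb c
      rw [zero_add, qh_zero hpos, zero_add] at this
      rw [this]
      exact Submodule.smul_mem _ _ (hb' q hq)

theorem Zm_le (hpos : ∀ i, 0 < lam i) (hf : f = fun t i => t ^ lam i) (r : ℕ)
    {ω : RF s (k + 1)} (h : ω ∈ Zm f) : ω ∈ Fm hpos f r :=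
  ⟨Zm_sf h, fun q _ => Zm_qh hpos hf h q⟩

theorem Fm_anti (hpos : ∀ i, 0 < lam i) {r r' : ℕ} (hr : r' ≤ r)
    {ω : RF s (k + 1)} (h : ω ∈ Fm hpos f r) : ω ∈ Fm hpos f r' :=
  ⟨h.1, fun q hq => h.2 q (by omega)⟩

theorem Fm_congr (hpos : ∀ i, 0 < lam i) {r : ℕ} {ω ω' : RF s (k + 1)} (e : EE ω' ω)
    (h : ω ∈ Fm hpos f r) : ω' ∈ Fm hpos f r :=
  ⟨h.1.congr e, fun q hq => by rw [qh_congr q e]; exact h.2 q hq⟩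

/-- column additivity -/
theorem GF_col (h : (Fin s → ℝ) → ℝ) (u : Fin k → (Fin s → ℝ) → ℝ) (b : Fin k)
    {c c' : (Fin s → ℝ) → ℝ} (hc : Sm c) (hc' : Sm c') :
    EE (GF h (Function.update u b c') - GF h (Function.update u b c))
      (GF h (Function.update u b (fun x => c' x - c x))) := by
  filter_upwards [hc.diff, hc'.diff] with x d d' v
  have key : ∀ e : (Fin s → ℝ) → ℝ,
      (Matrix.of fun i j : Fin k => fderiv ℝ (Function.update u b e j) x (v i))
      = Matrix.updateCol (Matrix.of fun i j : Fin k => fderiv ℝ (u j) x (v i)) b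
        (fun i => fderiv ℝ e x (v i)) := by
    intro e
    ext i j
    by_cases hj : j = b
    · subst hj; simp
    · simp [Matrix.updateCol_apply, hj]
  simp only [Pi.sub_apply, GF, key]
  have : (fun i => fderiv ℝ c' x (v i)) = (fun i => fderiv ℝ (fun x => c' x - c x) x (v i))
      + fun i => fderiv ℝ c x (v i) := by
    funext i
    rw [fderiv_fun_sub d' d]
    simp
  rw [this, Matrix.det_updateCol_add]
  ring

theorem tele (M : Submodule ℝ (RF s (k + 1)))
    (hM : ∀ {ω ω' : RF s (k + 1)}, EE ω' ω → ω ∈ M → ω' ∈ M)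
    (h : (Fin s → ℝ) → ℝ) {g g' : Fin (k + 1) → (Fin s → ℝ) → ℝ}
    (hg : ∀ b, Sm (g b)) (hg' : ∀ b, Sm (g' b))
    (H : ∀ b u, (∀ c, c ≠ b → u c = g c ∨ u c = g' c) → u b = (fun x => g' b x - g b x) →
      GF h u ∈ M) : GF h g' - GF h g ∈ M := by
  classical
  have main : ∀ t : Finset (Fin (k + 1)), GF h (t.piecewise g' g) - GF h g ∈ M := by
    intro t
    induction t using Finset.induction_on with
    | empty => simp
    | insert b t hb ih =>
      have h1 : GF h ((insert b t).piecewise g' g) - GF h (t.piecewise g' g) ∈ M := by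
        have e := GF_col h (t.piecewise g' g) b (hg b) (hg' b)
        have e1 : Function.update (t.piecewise g' g) b (g b) = t.piecewise g' g := by
          apply Function.update_eq_self_iff.2
          simp [hb]
        rw [e1] at e
        rw [Finset.piecewise_insert]
        refine hM e (H b _ ?_ (by simp))
        intro c hc
        rw [Function.update_of_ne hc]
        by_cases hct : c ∈ t
        · right; simp [hct]
        · left; simp [hct]
      have := Submodule.add_mem _ h1 ih
      rwa [sub_add_sub_cancel] at this
  have := main Finset.univ
  rwa [Finset.piecewise_univ] at this

variable (f) in
def G0 (p : ℕ) (h : (Fin s → ℝ) → ℝ) : Prop :=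
  Sm h ∧ (fun t => h (f t)) =O[𝓝 0] fun t : ℝ => t ^ p

theorem G0.decomp (hpos : ∀ i, 0 < lam i) (hf : f = fun t i => t ^ lam i) {p : ℕ}
    {h : (Fin s → ℝ) → ℝ} (hh : G0 f p h) :
    ∃ hL, Sm hL ∧ Lit lam 0 p hL ∧ Va f (fun x => h x - hL x) := by
  refine ⟨_, hh.1.sub (Sm.sum fun n _ => Sm.eval _), sumPp hpos p h hh.1, ?_⟩
  refine Eventually.of_forall fun t => ?_
  simp only [sub_sub_cancel]
  apply Finset.sum_eq_zero
  intro n hn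
  rw [f_eq hf]
  have h2 := eval_Pp_dl (lam := lam) n 0 h t (fun _ => 1)
  rw [pow_zero, one_mul] at h2
  rw [h2, expand_zero hpos p h hh.1 (fun _ => 1) _ n (by simpa using hn), mul_zero]
  refine Asymptotics.IsBigO.mono ?_ nhdsWithin_le_nhds
  simpa only [f_eq hf] using hh.2

theorem Lit.Pp_zero (hpos : ∀ i, 0 < lam i) {m p : ℕ} {h : (Fin s → ℝ) → ℝ} (hl : Lit lam m p h)
    {q : ℕ} (hq : q < p) : Pp lam q m h = 0 := by
  apply MvPolynomial.ext
  intro d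
  obtain ⟨α, rfl⟩ := Finsupp.equivFunOnFinite.symm.surjective d
  rw [coeff_Pp hpos, MvPolynomial.coeff_zero]
  split_ifs with hh
  · exact hl α (by omega)
  · rfl

theorem bigO_prod {ι : Type*} (t : Finset ι) (F : ι → ℝ → ℝ) (p : ι → ℕ)
    (hF : ∀ i, F i =O[𝓝 0] fun τ : ℝ => τ ^ p i) :
    (fun τ => ∏ i ∈ t, F i τ) =O[𝓝 0] fun τ : ℝ => τ ^ ∑ i ∈ t, p i := by
  classical
  induction t using Finset.induction_on with
  | empty => simpa using Asymptotics.isBigO_refl (fun _ : ℝ => (1 : ℝ)) (𝓝 0)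
  | insert a t ha ih =>
    simp only [Finset.prod_insert ha, Finset.sum_insert ha, pow_add]
    exact (hF a).mul ih

theorem lit_GF (hpos : ∀ i, 0 < lam i) {p : ℕ} {h : (Fin s → ℝ) → ℝ} (hh : Sm h)
    (hl : Lit lam 0 p h) {g : Fin k → (Fin s → ℝ) → ℝ} {P : Fin k → ℕ} (hg : ∀ b, Sm (g b))
    (hgl : ∀ b, Lit lam 0 (P b) (g b)) (J : Fin k → Fin s) :
    Lit lam (lS lam J) (p + ∑ b, P b) (fun x => GF h g x (eI J)) := by
  refine lit_of_bigO hpos (GF_sm hh hg _) fun x => ?_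
  have h1 : (fun τ : ℝ => τ ^ lS lam J * GF h g (dl lam τ x) (eI J))
      = fun τ => h (dl lam τ x) * ∑ σ : Equiv.Perm (Fin k), ((Equiv.Perm.sign σ : ℤ) : ℝ) *
        ∏ b, (τ ^ (0 + lam (J (σ b))) * pd s (J (σ b)) (g b) (dl lam τ x)) := by
    funext τ
    simp only [GF, Matrix.det_apply', Matrix.of_apply]
    rw [mul_left_comm]
    congr 1
    rw [Finset.mul_sum]
    apply Finset.sum_congr rfl
    intro σ _
    rw [Finset.prod_mul_distrib, mul_left_comm]
    congr 2
    rw [Finset.prod_pow_eq_pow_sum]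
    congr 1
    simp only [zero_add, lS]
    exact (Equiv.sum_comp σ (fun j => lam (J j))).symm
  rw [h1]
  have h2 : (fun τ => h (dl lam τ x)) =O[𝓝 0] fun τ : ℝ => τ ^ p := hl.bigO0 hpos hh x
  have h3 : (fun τ => ∑ σ : Equiv.Perm (Fin k), ((Equiv.Perm.sign σ : ℤ) : ℝ) *
        ∏ b, (τ ^ (0 + lam (J (σ b))) * pd s (J (σ b)) (g b) (dl lam τ x)))
      =O[𝓝 0] fun τ : ℝ => τ ^ ∑ b, P b := by
    apply Asymptotics.IsBigO.fun_sum
    intro σ _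
    apply Asymptotics.IsBigO.const_mul_left
    exact bigO_prod _ _ _ fun b => ((hgl b).pd (hg b) _).bigO hpos ((hg b).pd _) x
  refine (h2.mul h3).congr_right fun τ => ?_
  rw [pow_add]

theorem claimC (hpos : ∀ i, 0 < lam i) (hf : f = fun t i => t ^ lam i) {p : ℕ}
    {h : (Fin s → ℝ) → ℝ} (hh : G0 f p h) {g : Fin (k + 1) → (Fin s → ℝ) → ℝ}
    {P : Fin (k + 1) → ℕ} (hg : ∀ b, G0 f (P b) (g b)) :
    GF h g ∈ Fm hpos f (p + ∑ b, P b) := by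
  obtain ⟨hL, sL, lL, vL⟩ := hh.decomp hpos hf
  choose gL sg lg vg using fun b => (hg b).decomp hpos hf
  have e1 : GF h g - GF hL g ∈ Fm hpos f (p + ∑ b, P b) := by
    apply Zm_le hpos hf
    have : GF h g - GF hL g = GF (fun x => h x - hL x) g := by
      funext x v
      simp only [Pi.sub_apply, GF]
      ring
    rw [this]
    exact Z1 (hh.1.sub sL) (fun b => (hg b).1) vL
  have e2 : GF hL g - GF hL gL ∈ Fm hpos f (p + ∑ b, P b) := by
    apply Zm_le hpos hf
    refine tele _ (fun e h => Zm_congr e h) hL sg (fun b => (hg b).1) fun b u hu hb => ?_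
    refine Z3 sL ?_ b ?_
    · intro c
      by_cases hc : c = b
      · subst hc
        rw [hb]
        exact (hg c).1.sub (sg c)
      · rcases hu c hc with h | h <;> rw [h]
        · exact sg c
        · exact (hg c).1
    · rw [hb]; exact vg b
  have e3 : GF hL gL ∈ Fm hpos f (p + ∑ b, P b) := by
    refine ⟨fun I => GF_sm sL sg _, fun q hq => ?_⟩
    have : qh lam q (GF hL gL) = 0 := by
      unfold qh
      apply Finset.sum_eq_zero
      intro J _
      rw [(lit_GF hpos sL lL sg lg J).Pp_zero hpos hq]
      funext x v
      simp [GF]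
    rw [this]
    exact Submodule.zero_mem _
  have := Submodule.add_mem _ e1 (Submodule.add_mem _ e2 e3)
  rwa [sub_add_cancel, sub_add_cancel] at this

end filt


section phi

theorem phi_bigO {φ : ℝ → ℝ} (hφ : IsDiffeoGerm1 φ) :
    (fun t => φ t - deriv φ 0 * t) =O[𝓝 0] fun t : ℝ => t ^ 2 := by
  obtain ⟨h0, ⟨U, hU, hc⟩, -⟩ := hφ
  have hca : ContDiffAt ℝ (⊤ : ℕ∞) φ 0 := hc.contDiffAt hU
  have hev : ∀ᶠ t in 𝓝 (0 : ℝ), DifferentiableAt ℝ φ t := by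
    have h1 : ContDiffAt ℝ 1 φ 0 := hca.of_le (by exact_mod_cast le_top)
    have := h1.eventually (by simp)
    exact this.mono fun t ht => ht.differentiableAt (by simp)
  have hd : DifferentiableAt ℝ (deriv φ) 0 := by
    have h2 : ContDiffAt ℝ 1 (fderiv ℝ φ) 0 := hca.fderiv_right (WithTop.coe_le_coe.2 (le_top : (1 + 1 : ℕ∞) ≤ ⊤))
    have h3 : DifferentiableAt ℝ (fun t => fderiv ℝ φ t 1) 0 :=
      (h2.differentiableAt (by simp)).clm_apply (differentiableAt_const _)
    exact h3
  have hO := hd.hasDerivAt.isBigO_sub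
  obtain ⟨C, hC⟩ := hO.bound
  obtain ⟨δ, hδ, hB⟩ := Metric.eventually_nhds_iff_ball.1 (hC.and hev)
  apply Asymptotics.IsBigO.of_bound C
  filter_upwards [Metric.ball_mem_nhds (0 : ℝ) hδ] with t ht
  have hsub : Metric.closedBall (0 : ℝ) |t| ⊆ Metric.ball 0 δ := by
    apply Metric.closedBall_subset_ball
    simpa using ht
  have hder : ∀ x ∈ Metric.closedBall (0 : ℝ) |t|, HasDerivWithinAt (fun t => φ t - deriv φ 0 * t)
      (deriv φ x - deriv φ 0) (Metric.closedBall (0 : ℝ) |t|) x := by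
    intro x hx
    have h1 := (hB x (hsub hx)).2.hasDerivAt
    have h2 := (hasDerivAt_id x).const_mul (deriv φ 0)
    have h3 := h1.sub h2
    simp only [mul_one] at h3
    exact h3.hasDerivWithinAt
  have hC0 : 0 ≤ C * |t| := by
    have := (hB t ht).1
    simp only [sub_zero, Real.norm_eq_abs] at this
    exact (abs_nonneg _).trans this
  have := Convex.norm_image_sub_le_of_norm_hasDerivWithin_le (C := C * |t|) hder (by
    intro x hx
    have h1 := (hB x (hsub hx)).1
    simp only [sub_zero] at h1
    refine h1.trans ?_
    by_cases hCn : 0 ≤ C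
    · exact mul_le_mul_of_nonneg_left (by simpa using hx) hCn
    · have ht0 : |t| = 0 := by
        by_contra hne
        have : 0 < |t| := lt_of_le_of_ne (abs_nonneg _) (Ne.symm hne)
        nlinarith
      have hx' : |x| ≤ |t| := by simpa using hx
      have : |x| = 0 := le_antisymm (by rw [← ht0]; exact hx') (abs_nonneg _)
      rw [Real.norm_eq_abs, this, ht0]) (convex_closedBall _ _)
    (Metric.mem_closedBall_self (abs_nonneg t)) (show t ∈ _ by simp)
  simp only [h0, mul_zero, sub_zero] at this
  refine this.trans (le_of_eq ?_)
  simp only [norm_pow, Real.norm_eq_abs]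
  ring

theorem phi_O1 {φ : ℝ → ℝ} (hφ : IsDiffeoGerm1 φ) : φ =O[𝓝 0] fun t : ℝ => t := by
  have h1 := (phi_bigO hφ).trans (pow_bigO (a := 1) (b := 2) (by omega))
  have h2 := ((Asymptotics.isBigO_refl (fun t : ℝ => t) (𝓝 0)).const_mul_left (deriv φ 0))
  simp only [pow_one] at h1
  refine (h1.add h2).congr_left fun t => ?_
  ring

theorem phi_pow {φ : ℝ → ℝ} (hφ : IsDiffeoGerm1 φ) (p : ℕ) :
    (fun t => φ t ^ p - deriv φ 0 ^ p * t ^ p) =O[𝓝 0] fun t : ℝ => t ^ (p + 1) := by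
  induction p with
  | zero => simpa using Asymptotics.isBigO_zero _ _
  | succ p ih =>
    have h1 := ((phi_O1 hφ).pow p).mul (phi_bigO hφ)
    have h2 := ih.mul ((Asymptotics.isBigO_refl (fun t : ℝ => t) (𝓝 0)).const_mul_left (deriv φ 0))
    refine ((h1.congr_right (g₂ := fun t : ℝ => t ^ (p + 1 + 1)) fun t => by ring).add
      (h2.congr_right (g₂ := fun t : ℝ => t ^ (p + 1 + 1)) fun t => by ring)).congr_left fun t => ?_
    ring

theorem phi_tendsto {φ : ℝ → ℝ} (hφ : IsDiffeoGerm1 φ) : Tendsto φ (𝓝 0) (𝓝 0) := by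
  obtain ⟨h0, ⟨U, hU, hc⟩, -⟩ := hφ
  have := (hc.contDiffAt hU).continuousAt
  rw [ContinuousAt, h0] at this; exact this

theorem Phi_sm {s : ℕ} {Φ : (Fin s → ℝ) → (Fin s → ℝ)} (hΦ : IsDiffeoGerm s Φ) :
    ∀ᶠ x in 𝓝 (0 : Fin s → ℝ), ContDiffAt ℝ (⊤ : ℕ∞) Φ x := by
  obtain ⟨h0, ⟨U, hU, hc⟩, -⟩ := hΦ
  filter_upwards [eventually_mem_nhds_iff.2 hU] with x hx
  exact hc.contDiffAt hx

end phi

section key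
variable {s k : ℕ} {f : ℝ → Fin s → ℝ} {lam : Fin s → ℕ} {Φ : (Fin s → ℝ) → (Fin s → ℝ)} {φ : ℝ → ℝ}

theorem G0.anti {p q : ℕ} (hpq : q ≤ p) {h : (Fin s → ℝ) → ℝ} (hh : G0 f p h) : G0 f q h :=
  ⟨hh.1, hh.2.trans (pow_bigO hpq)⟩

theorem G0.smul {p : ℕ} {h : (Fin s → ℝ) → ℝ} (hh : G0 f p h) (c : ℝ) :
    G0 f p (fun x => c * h x) := ⟨(Sm.const c).mul hh.1, hh.2.const_mul_left c⟩

theorem G0.co (hf : f = fun t i => t ^ lam i) (i : Fin s) : G0 f (lam i) (fun x => x i) :=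
  ⟨Sm.coord i, by subst hf; exact Asymptotics.isBigO_refl _ _⟩

theorem G0.phi (hpos : ∀ i, 0 < lam i) (hf : f = fun t i => t ^ lam i) (hΦ : IsDiffeoGerm s Φ)
    (hφ : IsDiffeoGerm1 φ) (hconj : ∀ᶠ t in 𝓝 (0 : ℝ), Φ (f t) = f (φ t)) {p : ℕ}
    {h : (Fin s → ℝ) → ℝ} (hh : G0 f p h) :
    G0 f (p + 1) (fun x => h (Φ x) - deriv φ 0 ^ p * h x) := by
  refine ⟨(hh.1.comp hΦ.1 (Phi_sm hΦ)).sub ((Sm.const _).mul hh.1), ?_⟩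
  have hz := expand_zero hpos p h hh.1 (fun _ => 1)
    (Asymptotics.IsBigO.mono (by simpa only [f_eq hf] using hh.2) nhdsWithin_le_nhds)
  set q := MvPolynomial.eval (fun _ => (1 : ℝ)) (Pp lam p 0 h) with hq
  have hE : (fun t => h (f t) - t ^ p * q) =O[𝓝 0] fun t : ℝ => t ^ (p + 1) := by
    refine (expand hpos (p + 1) h hh.1 (fun _ => 1)).congr_left fun t => ?_
    rw [f_eq hf, Finset.sum_range_succ, Finset.sum_eq_zero, zero_add]
    intro n hn
    rw [hz n (by simpa using hn), mul_zero]
  have hE2 : (fun t => h (f (φ t)) - φ t ^ p * q) =O[𝓝 0] fun t : ℝ => t ^ (p + 1) :=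
    (hE.comp_tendsto (phi_tendsto hφ)).trans ((phi_O1 hφ).pow (p + 1))
  have h3 := (hE2.sub (hE.const_mul_left (deriv φ 0 ^ p))).add ((phi_pow hφ p).const_mul_left q)
  refine h3.congr' ?_ (EventuallyEq.refl _ _)
  filter_upwards [hconj] with t ht
  rw [ht]
  ring

theorem G0.phi' (hpos : ∀ i, 0 < lam i) (hf : f = fun t i => t ^ lam i) (hΦ : IsDiffeoGerm s Φ)
    (hφ : IsDiffeoGerm1 φ) (hconj : ∀ᶠ t in 𝓝 (0 : ℝ), Φ (f t) = f (φ t)) {p : ℕ}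
    {h : (Fin s → ℝ) → ℝ} (hh : G0 f p h) :
    G0 f p (fun x => h (Φ x)) := by
  refine ⟨hh.1.comp hΦ.1 (Phi_sm hΦ), ?_⟩
  have h1 := ((hh.phi hpos hf hΦ hφ hconj).anti (Nat.le_succ p)).2.add (hh.smul (deriv φ 0 ^ p)).2
  refine h1.congr_left fun t => ?_
  ring

theorem GF_scale (h : (Fin s → ℝ) → ℝ) (J : Fin k → Fin s) (c : ℝ) (d : Fin k → ℝ) :
    GF (fun x => c * h x) (fun b x => d b * x (J b)) = (c * ∏ b, d b) • GF h (co J) := by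
  funext x v
  have h1 : ∀ b w, fderiv ℝ (fun x : Fin s → ℝ => d b * x (J b)) x w = d b * w (J b) := by
    intro b w
    have := (hasFDerivAt_apply (𝕜 := ℝ) (J b) x).const_mul (d b)
    rw [this.fderiv]; rfl
  simp only [Pi.smul_apply, smul_eq_mul, GF_co]
  unfold GF
  simp only [h1]
  have h2 := Matrix.det_mul_row d (Matrix.of fun a b : Fin k => v a (J b))
  simp only [Matrix.of_apply] at h2
  rw [h2]
  ring

theorem mono_step (hpos : ∀ i, 0 < lam i) (hf : f = fun t i => t ^ lam i) (hΦ : IsDiffeoGerm s Φ)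
    (hφ : IsDiffeoGerm1 φ) (hconj : ∀ᶠ t in 𝓝 (0 : ℝ), Φ (f t) = f (φ t)) {p : ℕ}
    {h : (Fin s → ℝ) → ℝ} (hh : G0 f p h) (J : Fin (k + 1) → Fin s) :
    pl Φ (GF h (co J)) - deriv φ 0 ^ (p + lS lam J) • GF h (co J)
      ∈ Fm hpos f (p + lS lam J + 1) := by
  set a := deriv φ 0 with ha
  have hx : ∀ b, G0 f (lam (J b)) (co J b) := fun b => G0.co hf (J b)
  have hX : ∀ b, G0 f (lam (J b)) (fun x => Φ x (J b)) := fun b => (hx b).phi' hpos hf hΦ hφ hconj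
  have hx' : ∀ b, G0 f (lam (J b)) (fun x => a ^ lam (J b) * x (J b)) := fun b => (hx b).smul _
  have hd : ∀ b, G0 f (lam (J b) + 1) (fun x => Φ x (J b) - a ^ lam (J b) * x (J b)) :=
    fun b => (hx b).phi hpos hf hΦ hφ hconj
  have e0 : EE (pl Φ (GF h (co J))) (GF (fun x => h (Φ x)) (fun b x => Φ x (J b))) :=
    pull_GF hΦ.1 (Phi_sm hΦ) h (co J) (co_sm J)
  have e1 : GF (fun x => h (Φ x)) (fun b x => Φ x (J b))
      - GF (fun x => a ^ p * h x) (fun b x => Φ x (J b)) ∈ Fm hpos f (p + lS lam J + 1) := by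
    have h1 := claimC hpos hf (hh.phi hpos hf hΦ hφ hconj) hX
    have h2 : GF (fun x => h (Φ x)) (fun b x => Φ x (J b))
      - GF (fun x => a ^ p * h x) (fun b x => Φ x (J b))
      = GF (fun x => h (Φ x) - a ^ p * h x) (fun b x => Φ x (J b)) := by
      funext x v
      simp only [Pi.sub_apply, GF]
      ring
    rw [h2]
    exact Fm_anti hpos (by unfold lS; omega) h1
  have e2 : GF (fun x => a ^ p * h x) (fun b x => Φ x (J b))
      - GF (fun x => a ^ p * h x) (fun b x => a ^ lam (J b) * x (J b))
      ∈ Fm hpos f (p + lS lam J + 1) := by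
    refine tele _ (fun e h => Fm_congr hpos e h) _ (fun b => (hx' b).1) (fun b => (hX b).1)
      fun b u hu hb => ?_
    have hu' : ∀ c, G0 f (lam (J c) + if c = b then 1 else 0) (u c) := by
      intro c
      by_cases hc : c = b
      · subst hc
        rw [hb, if_pos rfl]
        exact hd c
      · rw [if_neg hc, add_zero]
        rcases hu c hc with h | h <;> rw [h]
        · exact hx' c
        · exact hX c
    have h1 := claimC hpos hf (hh.smul (a ^ p)) hu'
    refine Fm_anti hpos ?_ h1
    rw [Finset.sum_add_distrib]
    simp [lS, add_assoc]
  rw [GF_scale, Finset.prod_pow_eq_pow_sum, ← pow_add] at e2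
  have e3 := Submodule.add_mem _ e1 e2
  rw [sub_add_sub_cancel] at e3
  refine Fm_congr hpos ?_ e3
  filter_upwards [e0] with x hx v
  simp only [Pi.sub_apply, hx]
  rfl

end key


section final
variable {s k : ℕ} {f : ℝ → Fin s → ℝ} {lam : Fin s → ℕ} {Φ : (Fin s → ℝ) → (Fin s → ℝ)} {φ : ℝ → ℝ}

theorem isForm_qhsum (ω : RF s k) (c : ℝ) (r : ℕ) {η : RF s k} (hη : IsFormK s k η) :
    IsFormK s k (η + c • ∑ q ∈ Finset.range r, qh lam q ω : RF s k) := by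
  induction r with
  | zero => simpa using hη
  | succ r ih =>
    rw [Finset.sum_range_succ, smul_add, ← add_assoc]
    exact isForm_lin ih (qh_isForm r ω) c

theorem key (hpos : ∀ i, 0 < lam i) (hf : f = fun t i => t ^ lam i) (hΦ : IsDiffeoGerm s Φ)
    (hφ : IsDiffeoGerm1 φ) (hconj : ∀ᶠ t in 𝓝 (0 : ℝ), Φ (f t) = f (φ t)) {r : ℕ}
    {ω : RF s (k + 1)} (hω : IsFormK s (k + 1) ω) (hr : ω ∈ Fm hpos f r) :
    pl Φ ω - deriv φ 0 ^ r • ω ∈ Fm hpos f (r + 1) := by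
  set a := deriv φ 0 with ha
  set S : RF s (k + 1) := ∑ q ∈ Finset.range r, qh lam q ω with hS
  have hSZ : S ∈ Zm f := Submodule.sum_mem _ fun q hq => hr.2 q (by simpa using hq)
  have hη : IsFormK s (k + 1) (ω + (-1 : ℝ) • S) := isForm_qhsum ω (-1) r hω
  set η : RF s (k + 1) := ω + (-1 : ℝ) • S with hηd
  have hωS : ω = S + η := by rw [hηd]; module
  have hG : ∀ J ∈ SI s (k + 1), G0 f (r - lS lam J) (fun x => η x (eI J)) := by
    intro J hJ
    have hJ' := (mem_SI J).1 hJ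
    refine ⟨hη.sm _, ?_⟩
    have hfe : (fun x => η x (eI J)) = fun x => ω x (eI J) -
        ∑ q ∈ Finset.range r, MvPolynomial.eval x (Pp lam q (lS lam J) (fun x => ω x (eI J))) := by
      funext x
      simp only [hηd, hS, Pi.add_apply, Pi.smul_apply, Finset.sum_apply, qh_eI _ _ J hJ', smul_eq_mul]
      ring
    have hsm : Sm (fun x => ω x (eI J)) := hω.sm _
    have hl : Lit lam 0 (r - lS lam J) (fun x => η x (eI J)) := by
      intro α hα
      rw [hfe, tc_sub hsm (Sm.sum fun n _ => Sm.eval _), tc_sum _ _ (fun n => Sm.eval _)]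
      simp only [tc_eval, coeff_Pp hpos]
      rw [Finset.sum_ite_eq, if_pos (by rw [Finset.mem_range]; omega), sub_self]
    simpa only [f_eq hf] using hl.bigO0 hpos (hη.sm _) (fun _ => 1)
  have hpη : pl Φ η - a ^ r • η ∈ Fm hpos f (r + 1) := by
    have he : η = ∑ J ∈ SI s (k + 1), GF (fun y => η y (eI J)) (co J) := form_expand' hη
    have : pl Φ η - a ^ r • η = ∑ J ∈ SI s (k + 1),
        (pl Φ (GF (fun y => η y (eI J)) (co J)) - a ^ r • GF (fun y => η y (eI J)) (co J)) := by
      rw [Finset.sum_sub_distrib, ← Finset.smul_sum, ← pull_sum, ← he]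
    rw [this]
    refine Submodule.sum_mem _ fun J hJ => ?_
    have h1 := mono_step hpos hf hΦ hφ hconj (hG J hJ) J
    by_cases hc : lS lam J ≤ r
    · rw [Nat.sub_add_cancel hc] at h1
      exact h1
    · have h2 := claimC hpos hf (hG J hJ) (g := co J) (P := fun b => lam (J b))
        (fun b => G0.co hf (J b))
      have h3 : GF (fun y => η y (eI J)) (co J) ∈ Fm hpos f (r + 1) :=
        Fm_anti hpos (by have : lS lam J = ∑ b, lam (J b) := rfl
                         omega) h2
      have h4 := Submodule.add_mem _ (Fm_anti hpos (r' := r + 1) (by omega) h1)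
        (Submodule.smul_mem _ (deriv φ 0 ^ (r - lS lam J + lS lam J) - a ^ r) h3)
      convert h4 using 1
      module
  have hpS : pl Φ S - a ^ r • S ∈ Fm hpos f (r + 1) := by
    apply Zm_le hpos hf
    exact Submodule.sub_mem _ (pull_Zm hΦ.1 (Phi_sm hΦ) (phi_tendsto hφ) hconj hSZ)
      (Submodule.smul_mem _ _ hSZ)
  have h5 := Submodule.add_mem _ hpS hpη
  have h6 : pl Φ ω - a ^ r • ω = (pl Φ S - a ^ r • S) + (pl Φ η - a ^ r • η) := by
    rw [hωS, pull_add]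
    module
  rw [h6]
  exact h5

theorem finale (hpos : ∀ i, 0 < lam i)
    (hf : f = fun t i => t ^ lam i)
    (ω₁ ω₂ : RF s (k + 1)) (h₁ : IsFormK s (k+1) ω₁) (h₂ : IsFormK s (k+1) ω₂)
    (hΦ : IsDiffeoGerm s Φ) (hφ : IsDiffeoGerm1 φ)
    (hconj : ∀ᶠ t in 𝓝 (0 : ℝ), Φ (f t) = f (φ t))
    (hsame : pl Φ ω₁ - ω₂ ∈ Zm f)
    (r₁ r₂ : ℕ)
    (hr₁ : ¬ qh lam r₁ ω₁ ∈ Zm f ∧ ∀ r < r₁, qh lam r ω₁ ∈ Zm f)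
    (hr₂ : ¬ qh lam r₂ ω₂ ∈ Zm f ∧ ∀ r < r₂, qh lam r ω₂ ∈ Zm f) :
    r₁ = r₂ ∧ qh lam r₁ ω₂ - deriv φ 0 ^ r₁ • qh lam r₁ ω₁ ∈ Zm f := by
  have hF : ω₁ ∈ Fm hpos f r₁ := ⟨h₁.sf, hr₁.2⟩
  have hk := key hpos hf hΦ hφ hconj h₁ hF
  have h3 := Submodule.sub_mem _ hk (Zm_le hpos hf (r₁ + 1) hsame)
  have h4 : pl Φ ω₁ - deriv φ 0 ^ r₁ • ω₁ - (pl Φ ω₁ - ω₂) = ω₂ + (-deriv φ 0 ^ r₁) • ω₁ := by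
    module
  rw [h4] at h3
  have h5 : ∀ q < r₁ + 1, qh lam q ω₂ - deriv φ 0 ^ r₁ • qh lam q ω₁ ∈ Zm f := by
    intro q hq
    have := h3.2 q hq
    rw [qh_lin hpos q ω₂ ω₁ h₂.sf h₁.sf] at this
    convert this using 1
    module
  refine ⟨?_, h5 r₁ (by omega)⟩
  rcases lt_trichotomy r₁ r₂ with h | h | h
  · exfalso
    apply hr₁.1
    have h6 := Submodule.sub_mem _ (hr₂.2 r₁ h) (h5 r₁ (by omega))
    rw [sub_sub_cancel] at h6
    exact (Submodule.smul_mem_iff _ (pow_ne_zero _ hφ.2.2)).1 h6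
  · exact h
  · exfalso
    apply hr₂.1
    have h6 := Submodule.add_mem _ (h5 r₂ (by omega)) (Submodule.smul_mem _ (deriv φ 0 ^ r₁) (hr₁.2 r₂ h))
    rwa [sub_add_cancel] at h6

end final
/-- Diffeomorphic algebraic restrictions of `(k+1)`-forms to the quasi-homogeneous
monomial curve `f(t) = (t^{λ₁},…,t^{λ_s})` have proportional minimum quasi-degree
parts, the factor of proportionality being `(φ'(0))^{r}` where `r` is the common
minimal quasi-degree. -/
theorem proportional_minimum_quasiDegree_part
    (s k : ℕ) (lam : Fin s → ℕ) (hpos : ∀ i, 0 < lam i) (hmono : StrictMono lam)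
    (hind : LinIndepNonneg lam)
    (f : ℝ → Fin s → ℝ) (hf : f = fun t i => t ^ lam i)
    (ω₁ ω₂ : FormK s (k+1)) (h₁ : IsFormK s (k+1) ω₁) (h₂ : IsFormK s (k+1) ω₂)
    (Φ : (Fin s → ℝ) → (Fin s → ℝ)) (φ : ℝ → ℝ)
    (hΦ : IsDiffeoGerm s Φ) (hφ : IsDiffeoGerm1 φ)
    (hconj : ∀ᶠ t in 𝓝 (0 : ℝ), Φ (f t) = f (φ t))
    (hsame : SameARK s k (pullK s (k+1) Φ ω₁) ω₂ f)
    (r₁ r₂ : ℕ)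
    (hr₁ : ¬ ZeroARK s k (qhPartK s (k+1) lam r₁ ω₁) f ∧
      ∀ r < r₁, ZeroARK s k (qhPartK s (k+1) lam r ω₁) f)
    (hr₂ : ¬ ZeroARK s k (qhPartK s (k+1) lam r₂ ω₂) f ∧
      ∀ r < r₂, ZeroARK s k (qhPartK s (k+1) lam r ω₂) f) :
    r₁ = r₂ ∧ ∃ c : ℝ, c ≠ 0 ∧ c = (deriv φ 0) ^ r₁ ∧
      SameARK s k (qhPartK s (k+1) lam r₁ ω₂)
        (fun x v => c * qhPartK s (k+1) lam r₁ ω₁ x v) f := by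

  have hq : ∀ r (ω : FormK s (k + 1)), ZeroARK s k (qhPartK s (k+1) lam r ω) f ↔ qh lam r ω ∈ Zm f := by
    intro r ω
    have h := qh_eq hpos r ω
    rw [← h]
    exact Iff.rfl
  obtain ⟨e, hz⟩ := finale hpos hf ω₁ ω₂ h₁ h₂ hΦ hφ hconj hsame r₁ r₂
    ⟨fun h => hr₁.1 ((hq _ _).2 h), fun r hr => (hq _ _).1 (hr₁.2 r hr)⟩
    ⟨fun h => hr₂.1 ((hq _ _).2 h), fun r hr => (hq _ _).1 (hr₂.2 r hr)⟩
  refine ⟨e, deriv φ 0 ^ r₁, pow_ne_zero _ hφ.2.2, rfl, ?_⟩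
  have e1 := qh_eq hpos r₁ ω₁
  have e2 := qh_eq hpos r₁ ω₂
  rw [← e1, ← e2] at hz
  exact hz
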